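/- arXiv:1312.5978 — 2 statements merged into one kernel-verified Lean document; each statement's English description precedes it below -/
import Mathlib

section
/- For every constant δ with 0 < δ < 1 there exists a constant c > 0 and an integer n₀ such that for every n = 2^k ≥ n₀ the following holds with d = ⌊δn⌋ and N = n². For every homogeneous ΣΠΣΠ representation NW_d = Σ_{i=1}^{T} Π_{j=1}^{d_i} Q_{i,j} (each Q_{i,j} homogeneous and Σ_{j=1}^{d_i} deg(Q_{i,j}) = n for every i), the quantity T + Σ_{i=1}^{T} Σ_{j=1}^{d_i} (number of monomials appearing in Q_{i,j}) is at least n^{c·log log n}. (This is the polynomial-identity form of: any homogeneous depth-4 arithmetic circuit computing NW_d has size at least n^{Ω(log log n)}, since the size of such a circuit upper-bounds both its top fan-in and the total number of monomials computed at its bottom layer.) -/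
open MvPolynomial

/-- The Nisan–Wigderson polynomial `NW_d`, a polynomial in the variables
`x_{i,j}`, `i, j ∈ F`, given by `Σ_f Π_i x_{i, f(i)}` where `f` ranges over the
(coefficient vectors of) univariate polynomials of degree at most `d - 1`. -/
noncomputable def NW (F : Type*) [Field F] [Fintype F] (d : ℕ) :
    MvPolynomial (F × F) F :=
  ∑ a : Fin d → F, ∏ i : F, MvPolynomial.X (i, ∑ j : Fin d, a j * i ^ (j : ℕ))

/-!
The complexity measure of a polynomial is the dimension of the span of its shifted partial
derivatives `x ^ S * ∂_α p`, with `α` ranging over the `r`-subsets of a set `Y` of variables, `S`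
over the `ℓ`-subsets of its complement, and only squarefree monomials outside `Y` being kept.

* In a product whose factors only have monomials in at most `s` variables, at most `r` factors are
  affected by a derivative of order `r`. Expanding them replaces the shift `S` by a larger one of
  size at most `ℓ + r * s`, which bounds the measure of the product.
* Distinct graphs of polynomials of degree less than `d` share fewer than `d` points. Hence the
  leading monomials of the shifted derivatives of `NW_d` form a union of large families with small
  pairwise intersections, and the measure of `NW_d` is large. This only needs one block `Y` of rows
  on which many restrictions of the graphs are distinct, so it survives when many graphs are lost.
* A random restriction makes the factors narrow: colour all variables, choose a random polynomial
  `f` of degree less than `d`, and set to zero each variable whose colour differs from that of the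
  point of the graph of `f` in the same row. A monomial in many variables rarely survives, so a
  representation with few monomials loses all its wide ones while many graphs remain.
-/

section SquarefreeExponents

variable {σ : Type*}

/-- The exponent vector of the squarefree monomial `∏ x ∈ W, X x`. -/
noncomputable def sqfreeExp (W : Finset σ) : σ →₀ ℕ :=
  Finsupp.indicator W fun _ _ => 1

theorem sqfreeExp_apply [DecidableEq σ] (W : Finset σ) (x : σ) :
    sqfreeExp W x = if x ∈ W then 1 else 0 := by
  simp [sqfreeExp, Finsupp.indicator_apply]

theorem support_sqfreeExp (W : Finset σ) : (sqfreeExp W).support = W := by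
  classical
  ext x
  simp [sqfreeExp_apply]

theorem sqfreeExp_injective : Function.Injective (sqfreeExp : Finset σ → σ →₀ ℕ) :=
  Function.LeftInverse.injective support_sqfreeExp

theorem sqfreeExp_add_eq_sqfreeExp_iff [DecidableEq σ] {u v : σ →₀ ℕ} {W : Finset σ} :
    u + v = sqfreeExp W ↔ ∃ X ⊆ W, u = sqfreeExp X ∧ v = sqfreeExp (W \ X) := by
  constructor
  · intro h
    have hx (x : σ) : u x + v x = if x ∈ W then 1 else 0 := by
      rw [← sqfreeExp_apply, ← h, Finsupp.add_apply]
    refine ⟨u.support, fun x hu => ?_, ?_, ?_⟩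
    · have := hx x
      grind
    all_goals
      ext x
      have := hx x
      grind [sqfreeExp_apply]
  · rintro ⟨X, hX, rfl, rfl⟩
    ext x
    have := @hX x
    grind [sqfreeExp_apply, Finsupp.add_apply]

theorem coeff_sqfreeExp_mul {R : Type*} [CommSemiring R] [DecidableEq σ] (p q : MvPolynomial σ R)
    (W : Finset σ) :
    coeff (sqfreeExp W) (p * q) =
      ∑ X ∈ W.powerset, coeff (sqfreeExp X) p * coeff (sqfreeExp (W \ X)) q := by
  rw [coeff_mul]
  symm
  refine Finset.sum_bij (fun X _ => (sqfreeExp X, sqfreeExp (W \ X))) (fun X hX => ?_)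
    (fun X _ X' _ h => sqfreeExp_injective (Prod.ext_iff.1 h).1) (fun uv huv => ?_)
    (fun _ _ => rfl)
  · exact Finset.HasAntidiagonal.mem_antidiagonal.2
      (sqfreeExp_add_eq_sqfreeExp_iff.2 ⟨X, Finset.mem_powerset.1 hX, rfl, rfl⟩)
  · obtain ⟨X, hX, hu, hv⟩ := sqfreeExp_add_eq_sqfreeExp_iff.1
      (Finset.HasAntidiagonal.mem_antidiagonal.1 huv)
    exact ⟨X, Finset.mem_powerset.2 hX, Prod.ext hu.symm hv.symm⟩

theorem prod_X_eq_monomial_sqfreeExp {R : Type*} [CommSemiring R] (W : Finset σ) :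
    ∏ x ∈ W, (X x : MvPolynomial σ R) = monomial (sqfreeExp W) 1 := by
  rw [monomial_eq, C_1, one_mul, Finsupp.prod, support_sqfreeExp]
  classical
  refine Finset.prod_congr rfl fun x hx => ?_
  rw [sqfreeExp_apply, if_pos hx, pow_one]

end SquarefreeExponents

theorem exists_sum_eq_of_coeff_prod_ne_zero {σ ι R : Type*} [CommSemiring R]
    {J : Finset ι} {p : ι → MvPolynomial σ R} {m : σ →₀ ℕ} (h : coeff m (∏ j ∈ J, p j) ≠ 0) :
    ∃ u : ι → σ →₀ ℕ, ∑ j ∈ J, u j = m ∧ ∀ j ∈ J, u j ∈ (p j).support := by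
  classical
  induction J using Finset.induction_on generalizing m with
  | empty =>
    refine ⟨0, ?_, by simp⟩
    by_contra hm
    exact h (by rw [Finset.prod_empty, coeff_one, if_neg (by simpa using hm)])
  | insert j J hj ih =>
    rw [Finset.prod_insert hj, ← mem_support_iff] at h
    obtain ⟨a, ha, b, hb, rfl⟩ := Finset.mem_add.1 (support_mul _ _ h)
    obtain ⟨u, rfl, hu⟩ := ih (mem_support_iff.1 hb)
    refine ⟨Function.update u j a, ?_, fun i hi => ?_⟩
    · rw [Finset.sum_insert hj, Function.update_self, Finset.sum_update_of_notMem hj]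
    · rcases eq_or_ne i j with rfl | hij
      · rwa [Function.update_self]
      · rw [Function.update_of_ne hij]
        exact hu i (Finset.mem_of_mem_insert_of_ne hi hij)

section Restriction

variable {σ R : Type*} [CommSemiring R]

open Classical in
/-- The algebra endomorphism setting the variables outside `A` to zero. -/
noncomputable def restrictVars (A : Set σ) : MvPolynomial σ R →ₐ[R] MvPolynomial σ R :=
  aeval fun x => if x ∈ A then X x else 0

open Classical in
theorem restrictVars_monomial (A : Set σ) (m : σ →₀ ℕ) (r : R) :
    restrictVars A (monomial m r) = if ↑m.support ⊆ A then monomial m r else 0 := by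
  rw [restrictVars, aeval_monomial, ← C_eq_algebraMap]
  split_ifs with h
  · rw [monomial_eq]
    congr 1
    exact Finsupp.prod_congr fun x hx => by rw [if_pos (h hx)]
  · obtain ⟨x, hx, hxA⟩ := Set.not_subset.1 h
    rw [Finsupp.prod, Finset.prod_eq_zero hx, mul_zero]
    rw [if_neg hxA, zero_pow (Finsupp.mem_support_iff.1 hx)]

open Classical in
theorem coeff_restrictVars (A : Set σ) (m : σ →₀ ℕ) (p : MvPolynomial σ R) :
    coeff m (restrictVars A p) = if ↑m.support ⊆ A then coeff m p else 0 := by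
  induction p using MvPolynomial.induction_on' with
  | monomial u r =>
    rw [restrictVars_monomial]
    rcases eq_or_ne u m with rfl | hum
    · split_ifs <;> simp
    · split_ifs <;> simp [coeff_monomial, hum]
  | add p q hp hq =>
    rw [map_add, coeff_add, hp, hq]
    split_ifs <;> simp

theorem mem_support_restrictVars {A : Set σ} {m : σ →₀ ℕ} {p : MvPolynomial σ R} :
    m ∈ (restrictVars A p).support ↔ m ∈ p.support ∧ ↑m.support ⊆ A := by
  classical
  simp [coeff_restrictVars, and_comm]

theorem totalDegree_restrictVars_le (A : Set σ) (p : MvPolynomial σ R) :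
    (restrictVars A p).totalDegree ≤ p.totalDegree :=
  Finset.sup_mono fun _ hm => (mem_support_restrictVars.1 hm).1

theorem mem_support_sub_restrictVars {R : Type*} [CommRing R] {A : Set σ}
    {m : σ →₀ ℕ} {p : MvPolynomial σ R} :
    m ∈ (p - restrictVars A p).support ↔ m ∈ p.support ∧ ¬ ↑m.support ⊆ A := by
  classical
  simp only [mem_support_iff, coeff_sub, coeff_restrictVars]
  split_ifs with h <;> simp [h]

end Restriction

section ShiftedPartials

variable {σ R : Type*} [DecidableEq σ] [CommSemiring R]

/-- The squarefree coefficients of the shifted partial derivative `x ^ S * ∂_α p` after the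
variables in `Y` are set to zero: for `α ⊆ Y`, the monomial `U` of the shifted derivative comes
from the monomial `α ∪ (U \ S)` of `p`. Monomials of `p` that are not squarefree are ignored. -/
noncomputable def shiftedPartial (Y S α : Finset σ) : MvPolynomial σ R →ₗ[R] (Finset σ → R) :=
  LinearMap.pi fun U =>
    if S ⊆ U ∧ Disjoint U Y then lcoeff R (sqfreeExp (α ∪ U \ S)) else 0

theorem shiftedPartial_apply (Y S α : Finset σ) (p : MvPolynomial σ R) (U : Finset σ) :
    shiftedPartial Y S α p U =
      if S ⊆ U ∧ Disjoint U Y then coeff (sqfreeExp (α ∪ U \ S)) p else 0 := by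
  rw [shiftedPartial, LinearMap.pi_apply]
  split_ifs <;> simp

theorem coeff_sqfreeExp_union_mul_restrictVars {Y α V : Finset σ} (hα : α ⊆ Y)
    (hV : Disjoint V Y) (p q : MvPolynomial σ R) :
    coeff (sqfreeExp (α ∪ V)) (p * restrictVars (↑Y)ᶜ q) =
      ∑ Γ ∈ V.powerset,
        coeff (sqfreeExp (α ∪ Γ)) p * coeff (sqfreeExp (V \ Γ)) (restrictVars (↑Y)ᶜ q) := by
  have hαV : Disjoint α V := (hV.mono_right hα).symm
  rw [coeff_sqfreeExp_mul]
  symm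
  refine Finset.sum_of_injOn (α ∪ ·) (fun Γ hΓ Γ' hΓ' h => ?_) (fun Γ hΓ => ?_)
    (fun X hX hX' => ?_) (fun Γ _ => ?_)
  · have hΓα := hαV.mono_right (Finset.mem_powerset.1 hΓ)
    have hΓα' := hαV.mono_right (Finset.mem_powerset.1 hΓ')
    rw [← Finset.union_sdiff_cancel_left hΓα, ← Finset.union_sdiff_cancel_left hΓα']
    exact congrArg (· \ α) h
  · exact Finset.mem_powerset.2 (Finset.union_subset_union_right (Finset.mem_powerset.1 hΓ))
  · have hαX : ¬ α ⊆ X := fun hαX => hX' ⟨X \ α,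
      Finset.mem_powerset.2 (sdiff_le_iff.2 (Finset.mem_powerset.1 hX)),
      Finset.union_sdiff_of_subset hαX⟩
    obtain ⟨y, hyα, hyX⟩ := Finset.not_subset.1 hαX
    rw [coeff_restrictVars, if_neg, mul_zero]
    rw [support_sqfreeExp]
    exact fun h => h (Finset.mem_sdiff.2 ⟨Finset.mem_union_left V hyα, hyX⟩) (hα hyα)
  · congr 3
    have := Finset.disjoint_left.1 hαV
    grind

variable [Fintype σ]

theorem shiftedPartial_mul_restrictVars {Y S α : Finset σ} (hα : α ⊆ Y)
    (p q : MvPolynomial σ R) :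
    shiftedPartial Y S α (p * restrictVars (↑Y)ᶜ q) =
      ∑ Γ ∈ (Y ∪ S)ᶜ.powerset,
        coeff (sqfreeExp (α ∪ Γ)) p • shiftedPartial Y (S ∪ Γ) ∅ (restrictVars (↑Y)ᶜ q) := by
  ext U
  simp only [Finset.sum_apply, Pi.smul_apply, shiftedPartial_apply, smul_eq_mul,
    Finset.empty_union, mul_ite, mul_zero]
  split_ifs with h
  · obtain ⟨hSU, hUY⟩ := h
    rw [coeff_sqfreeExp_union_mul_restrictVars hα (hUY.mono_left Finset.sdiff_subset),
      ← Finset.sum_filter]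
    refine Finset.sum_congr ?_ fun Γ _ => by rw [sdiff_sdiff]; rfl
    ext Γ
    have := Finset.disjoint_left.1 hUY
    simp only [Finset.mem_powerset, Finset.mem_filter]
    grind [Finset.mem_compl]
  · refine (Finset.sum_eq_zero fun Γ _ => if_neg fun h' => h ⟨?_, h'.2⟩).symm
    exact Finset.subset_union_left.trans h'.1

/-- The space of shifted partial derivatives of `p` (in the sense of `shiftedPartial`), with
derivatives of order `r` in the variables of `Y` and shifts of degree `ℓ` in the other variables.
Its dimension is the complexity measure of the lower bound. -/
noncomputable def shiftedPartials (Y : Finset σ) (r ℓ : ℕ) (p : MvPolynomial σ R) :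
    Submodule R (Finset σ → R) :=
  Submodule.span R
    {v | ∃ α ∈ Y.powersetCard r, ∃ S ∈ Yᶜ.powersetCard ℓ, shiftedPartial Y S α p = v}

variable {K : Type*} [Field K]

theorem finrank_shiftedPartials_add_le (Y : Finset σ) (r ℓ : ℕ) (p q : MvPolynomial σ K) :
    Module.finrank K (shiftedPartials Y r ℓ (p + q)) ≤
      Module.finrank K (shiftedPartials Y r ℓ p) + Module.finrank K (shiftedPartials Y r ℓ q) := by
  refine (Submodule.finrank_mono (Submodule.span_le.2 ?_)).trans
    (Submodule.finrank_add_le_finrank_add_finrank _ _)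
  rintro _ ⟨α, hα, S, hS, rfl⟩
  rw [map_add]
  exact Submodule.add_mem_sup (Submodule.subset_span ⟨α, hα, S, hS, rfl⟩)
    (Submodule.subset_span ⟨α, hα, S, hS, rfl⟩)

theorem finrank_shiftedPartials_zero (Y : Finset σ) (r ℓ : ℕ) :
    Module.finrank K (shiftedPartials Y r ℓ (0 : MvPolynomial σ K)) = 0 := by
  rw [Submodule.finrank_eq_zero, shiftedPartials, Submodule.span_eq_bot]
  rintro _ ⟨α, -, S, -, rfl⟩
  exact map_zero _

theorem finrank_shiftedPartials_sum_le {ι : Type*} (I : Finset ι) (Y : Finset σ) (r ℓ : ℕ)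
    (p : ι → MvPolynomial σ K) :
    Module.finrank K (shiftedPartials Y r ℓ (∑ i ∈ I, p i)) ≤
      ∑ i ∈ I, Module.finrank K (shiftedPartials Y r ℓ (p i)) :=
  Finset.le_sum_of_subadditive (fun p => Module.finrank K (shiftedPartials Y r ℓ p))
    (finrank_shiftedPartials_zero Y r ℓ).le
    (finrank_shiftedPartials_add_le Y r ℓ) I p

end ShiftedPartials

section MeasureUpperBound

variable {σ ι R : Type*} [DecidableEq σ] [CommRing R]

theorem card_bounds_of_coeff_prod_sub_restrictVars_ne_zero {J : Finset ι}
    {Q : ι → MvPolynomial σ R} {s : ℕ} (hs : ∀ j, ∀ m ∈ (Q j).support, m.support.card ≤ s)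
    {Y W : Finset σ}
    (h : coeff (sqfreeExp W) (∏ j ∈ J, (Q j - restrictVars (↑Y)ᶜ (Q j))) ≠ 0) :
    (∀ j ∈ J, (Q j).totalDegree ≠ 0) ∧ J.card ≤ (W ∩ Y).card ∧ W.card ≤ J.card * s := by
  obtain ⟨u, hu, hmem⟩ := exists_sum_eq_of_coeff_prod_ne_zero h
  have hQ : ∀ j ∈ J, u j ∈ (Q j).support := fun j hj =>
    (mem_support_sub_restrictVars.1 (hmem j hj)).1
  have hY : ∀ j ∈ J, ∃ y ∈ Y, u j y ≠ 0 := fun j hj => by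
    obtain ⟨y, hy, hyY⟩ := Set.not_subset.1 (mem_support_sub_restrictVars.1 (hmem j hj)).2
    exact ⟨y, by simpa using hyY, Finsupp.mem_support_iff.1 hy⟩
  refine ⟨fun j hj hdeg => ?_, ?_, ?_⟩
  · obtain ⟨y, -, hy⟩ := hY j hj
    exact hy ((totalDegree_eq_zero_iff _ _).1 hdeg (u j) (hQ j hj) y)
  · calc J.card = ∑ j ∈ J, 1 := Finset.card_eq_sum_ones J
      _ ≤ ∑ j ∈ J, ∑ y ∈ Y, u j y := Finset.sum_le_sum fun j hj => by
          obtain ⟨y, hyY, hy⟩ := hY j hj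
          exact (Nat.one_le_iff_ne_zero.2 hy).trans
            (Finset.single_le_sum (f := u j) (fun _ _ => Nat.zero_le _) hyY)
      _ = ∑ y ∈ Y, sqfreeExp W y := by
          rw [Finset.sum_comm, ← hu]
          simp only [Finsupp.finsetSum_apply]
      _ = (W ∩ Y).card := by
          simp only [sqfreeExp_apply]
          rw [← Finset.card_filter, Finset.filter_mem_eq_inter, Finset.inter_comm]
  · calc W.card = (∑ j ∈ J, u j).support.card := by rw [hu, support_sqfreeExp]
      _ ≤ (J.biUnion fun j => (u j).support).card := Finset.card_le_card Finsupp.support_finsetSum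
      _ ≤ J.card * s := Finset.card_biUnion_le_card_mul _ _ _ fun j hj => hs j _ (hQ j hj)

variable [Fintype σ] [Fintype ι]

theorem shiftedPartial_prod [DecidableEq ι] (Q : ι → MvPolynomial σ R) {Y S α : Finset σ}
    (hα : α ⊆ Y) :
    shiftedPartial Y S α (∏ j, Q j) =
      ∑ J : Finset ι, ∑ Γ ∈ (Y ∪ S)ᶜ.powerset,
        coeff (sqfreeExp (α ∪ Γ)) (∏ j ∈ J, (Q j - restrictVars (↑Y)ᶜ (Q j))) •
          shiftedPartial Y (S ∪ Γ) ∅ (restrictVars (↑Y)ᶜ (∏ j ∈ Jᶜ, Q j)) := by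
  have hprod : ∏ j, Q j = ∑ J : Finset ι,
      (∏ j ∈ J, (Q j - restrictVars (↑Y)ᶜ (Q j))) * restrictVars (↑Y)ᶜ (∏ j ∈ Jᶜ, Q j) := by
    rw [← Finset.powerset_univ]
    simp only [map_prod, Finset.compl_eq_univ_sdiff]
    rw [← Finset.prod_add]
    simp only [sub_add_cancel]
  rw [hprod, map_sum]
  exact Finset.sum_congr rfl fun J _ => shiftedPartial_mul_restrictVars hα _ _

theorem shiftedPartials_prod_le_span [DecidableEq ι] {Q : ι → MvPolynomial σ R} {s : ℕ}
    (hs : ∀ j, ∀ m ∈ (Q j).support, m.support.card ≤ s) (Y : Finset σ) (r ℓ : ℕ) :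
    shiftedPartials Y r ℓ (∏ j, Q j) ≤ Submodule.span R
      ((fun JU : Finset ι × Finset σ =>
          shiftedPartial Y JU.2 ∅ (restrictVars (↑Y)ᶜ (∏ j ∈ JU.1ᶜ, Q j))) ''
        ({j | (Q j).totalDegree ≠ 0} : Finset ι).powerset ×ˢ
          (Finset.Icc ℓ (ℓ + r * s)).biUnion Yᶜ.powersetCard) := by
  refine Submodule.span_le.2 ?_
  rintro _ ⟨α, hα, S, hS, rfl⟩
  obtain ⟨hαY, hαr⟩ := Finset.mem_powersetCard.1 hα
  obtain ⟨hSY, hSℓ⟩ := Finset.mem_powersetCard.1 hS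
  rw [shiftedPartial_prod Q hαY]
  refine Submodule.sum_mem _ fun J _ => Submodule.sum_mem _ fun Γ hΓ => ?_
  by_cases hc : coeff (sqfreeExp (α ∪ Γ)) (∏ j ∈ J, (Q j - restrictVars (↑Y)ᶜ (Q j))) = 0
  · rw [hc, zero_smul]
    exact Submodule.zero_mem _
  obtain ⟨hdeg, hJ, hcard⟩ := card_bounds_of_coeff_prod_sub_restrictVars_ne_zero hs hc
  obtain ⟨hΓY, hΓS⟩ := Finset.disjoint_union_right.1
    (Finset.subset_compl_iff_disjoint_right.1 (Finset.mem_powerset.1 hΓ))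
  have hJr : J.card ≤ r := by
    rw [Finset.union_inter_distrib_right, Finset.disjoint_iff_inter_eq_empty.1 hΓY,
      Finset.union_empty] at hJ
    exact (hJ.trans (Finset.card_le_card Finset.inter_subset_left)).trans_eq hαr
  have hΓ_card : Γ.card ≤ r * s :=
    (Finset.card_le_card Finset.subset_union_right).trans
      (hcard.trans (Nat.mul_le_mul_right s hJr))
  have hSΓ : (S ∪ Γ).card = ℓ + Γ.card := by
    rw [Finset.card_union_of_disjoint hΓS.symm, hSℓ]
  refine Submodule.smul_mem _ _ (Submodule.subset_span ⟨(J, S ∪ Γ), ⟨?_, ?_⟩, rfl⟩)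
  · exact Finset.mem_powerset.2 fun j hj => Finset.mem_filter.2 ⟨Finset.mem_univ j, hdeg j hj⟩
  · rw [Finset.mem_coe, Finset.mem_biUnion]
    exact ⟨_, Finset.mem_Icc.2 ⟨by omega, by omega⟩, Finset.mem_powersetCard.2
      ⟨Finset.union_subset hSY (Finset.subset_compl_iff_disjoint_right.2 hΓY), hSΓ⟩⟩

theorem finrank_shiftedPartials_prod_le {K : Type*} [Field K] {Q : ι → MvPolynomial σ K}
    {s : ℕ} (hs : ∀ j, ∀ m ∈ (Q j).support, m.support.card ≤ s) (Y : Finset σ) (r ℓ : ℕ) :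
    Module.finrank K (shiftedPartials Y r ℓ (∏ j, Q j)) ≤
      2 ^ (∑ j, (Q j).totalDegree) * ∑ i ∈ Finset.Icc ℓ (ℓ + r * s), (Yᶜ.card).choose i := by
  classical
  refine (Submodule.finrank_mono (shiftedPartials_prod_le_span hs Y r ℓ)).trans ?_
  rw [← Finset.coe_product, ← Finset.coe_image]
  refine (finrank_span_finset_le_card _).trans (Finset.card_image_le.trans ?_)
  rw [Finset.card_product, Finset.card_powerset]
  refine Nat.mul_le_mul (Nat.pow_le_pow_right two_pos ?_) ?_
  · rw [Finset.card_filter]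
    exact Finset.sum_le_sum fun j _ => by split_ifs <;> omega
  · refine Finset.card_biUnion_le.trans_eq (Finset.sum_congr rfl fun i _ => ?_)
    exact Finset.card_powersetCard i _

end MeasureUpperBound

section MeasureLowerBound

theorem exists_injective_weight (σ : Type*) [Finite σ] :
    ∃ w : σ → ℕ, Function.Injective fun X : Finset σ => ∑ x ∈ X, w x := by
  obtain ⟨n, ⟨e⟩⟩ := Finite.exists_equiv_fin σ
  refine ⟨fun x => 2 ^ (e x : ℕ), ?_⟩
  have h := (Finset.geomSum_injective le_rfl).comp
    (Finset.map_injective (e.toEmbedding.trans Fin.valEmbedding))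
  simpa [Function.comp_def] using h

theorem exists_maximal_representatives {α β : Type*} [DecidableEq β] (E : Finset α) (f : α → β)
    (w : α → ℕ) :
    ∃ 𝒢 ⊆ E, 𝒢.card = (E.image f).card ∧ ∀ G ∈ 𝒢, ∀ x ∈ E, f x = f G → w x ≤ w G := by
  have hsurj : Set.SurjOn f {G ∈ E | ∀ x ∈ E, f x = f G → w x ≤ w G} (E.image f) := by
    rw [Set.SurjOn, Finset.coe_image, Set.image_subset_iff]
    intro x hx
    obtain ⟨G, hG, hmax⟩ := Finset.exists_max_image {y ∈ E | f y = f x} w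
      ⟨x, Finset.mem_filter.2 ⟨hx, rfl⟩⟩
    rw [Finset.mem_filter] at hG
    refine ⟨G, ⟨hG.1, fun y hy hyG => hmax y (Finset.mem_filter.2 ⟨hy, ?_⟩)⟩, hG.2⟩
    exact hyG.trans hG.2
  obtain ⟨𝒢, h𝒢, hinj, himage⟩ := Finset.exists_subset_injOn_image_eq_of_surjOn _ _ hsurj
  exact ⟨𝒢, fun G hG => (h𝒢 hG).1, by rw [← himage, Finset.card_image_of_injOn hinj],
    fun G hG => (h𝒢 hG).2⟩

theorem linearIndependent_of_triangular {ι α K β : Type*} [Ring K] [NoZeroDivisors K]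
    [LinearOrder β]
    (v : ι → α → K) (c : ι → α) (w : ι → β) (hw : Function.Injective w)
    (hdiag : ∀ i, v i (c i) ≠ 0) (htri : ∀ i j, v i (c j) ≠ 0 → w j ≤ w i) :
    LinearIndependent K v := by
  classical
  rw [linearIndependent_iff']
  intro I g hg
  by_contra! h
  obtain ⟨i, hi, hmax⟩ := Finset.exists_max_image {i ∈ I | g i ≠ 0} w
    (by simpa [Finset.Nonempty] using h)
  rw [Finset.mem_filter] at hi
  have hsum : ∑ j ∈ I, g j * v j (c i) = g i * v i (c i) := by
    refine Finset.sum_eq_single_of_mem i hi.1 fun j hj hji => ?_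
    by_contra hne
    obtain ⟨hgj, hvj⟩ := mul_ne_zero_iff.1 hne
    exact hji (hw ((hmax j (Finset.mem_filter.2 ⟨hj, hgj⟩)).antisymm (htri j i hvj)))
  have hzero := congrFun hg (c i)
  simp only [Finset.sum_apply, Pi.smul_apply, smul_eq_mul, hsum, Pi.zero_apply] at hzero
  exact mul_ne_zero hi.2 (hdiag i) hzero

variable {σ K : Type*} [DecidableEq σ] [Field K]

theorem sum_le_sum_of_shiftedPartial_ne_zero {R : Type*} [CommSemiring R]
    {p : MvPolynomial σ R} {Y G U U' : Finset σ} {w : σ → ℕ} (hGU : G \ Y ⊆ U)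
    (hmax : ∀ W, coeff (sqfreeExp W) p ≠ 0 → W ∩ Y = G ∩ Y →
      ∑ x ∈ W \ Y, w x ≤ ∑ x ∈ G \ Y, w x)
    (h : shiftedPartial Y (U \ (G \ Y)) (G ∩ Y) p U' ≠ 0) :
    ∑ x ∈ U', w x ≤ ∑ x ∈ U, w x := by
  set S := U \ (G \ Y)
  rw [shiftedPartial_apply, ite_ne_right_iff] at h
  obtain ⟨⟨hSU', hU'Y⟩, hcoeff⟩ := h
  have hdisj : Disjoint (U' \ S) Y := hU'Y.mono_left Finset.sdiff_subset
  have hinter : (G ∩ Y ∪ U' \ S) ∩ Y = G ∩ Y := by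
    rw [Finset.union_inter_distrib_right, Finset.disjoint_iff_inter_eq_empty.1 hdisj,
      Finset.union_empty, Finset.inter_assoc, Finset.inter_self]
  have hsdiff : (G ∩ Y ∪ U' \ S) \ Y = U' \ S := by
    rw [Finset.union_sdiff_distrib, Finset.sdiff_eq_empty_iff_subset.2 Finset.inter_subset_right,
      Finset.empty_union, Finset.sdiff_eq_self_of_disjoint hdisj]
  calc ∑ x ∈ U', w x = ∑ x ∈ U' \ S, w x + ∑ x ∈ S, w x := (Finset.sum_sdiff hSU').symm
    _ ≤ ∑ x ∈ G \ Y, w x + ∑ x ∈ S, w x := by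
      gcongr ?_ + _
      exact hsdiff ▸ hmax _ hcoeff hinter
    _ = ∑ x ∈ U, w x := by rw [add_comm, Finset.sum_sdiff hGU]

theorem exists_card_filter_le_finrank_shiftedPartials [Fintype σ] {p : MvPolynomial σ K}
    {𝒲 : Finset (Finset σ)} (h𝒲 : ∀ W, W ∈ 𝒲 ↔ coeff (sqfreeExp W) p ≠ 0) {Y : Finset σ}
    {r m : ℕ} (hr : ∀ W ∈ 𝒲, (W ∩ Y).card = r) (hm : ∀ W ∈ 𝒲, (W \ Y).card = m) (ℓ : ℕ) :
    ∃ 𝒢 ⊆ 𝒲, 𝒢.card = (𝒲.image (· ∩ Y)).card ∧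
      {U ∈ Yᶜ.powersetCard (ℓ + m) | ∃ G ∈ 𝒢, G \ Y ⊆ U}.card ≤
        Module.finrank K (shiftedPartials Y r ℓ p) := by
  obtain ⟨w, hw⟩ := exists_injective_weight σ
  obtain ⟨𝒢, h𝒢𝒲, h𝒢_card, h𝒢_max⟩ :=
    exists_maximal_representatives 𝒲 (· ∩ Y) fun G => ∑ x ∈ G \ Y, w x
  refine ⟨𝒢, h𝒢𝒲, h𝒢_card, ?_⟩
  set 𝒰 := {U ∈ Yᶜ.powersetCard (ℓ + m) | ∃ G ∈ 𝒢, G \ Y ⊆ U} with h𝒰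
  have h𝒰_mem (U : 𝒰) : (U.1 ⊆ Yᶜ ∧ U.1.card = ℓ + m) ∧ ∃ G ∈ 𝒢, G \ Y ⊆ U := by
    simpa only [h𝒰, Finset.mem_filter, Finset.mem_powersetCard] using U.2
  choose hU G hG hGU using h𝒰_mem
  have hli : LinearIndependent K
      fun U : 𝒰 => shiftedPartial Y (U.1 \ (G U \ Y)) (G U ∩ Y) p := by
    refine linearIndependent_of_triangular _ (fun U => U.1) (fun U => ∑ x ∈ U.1, w x)
      (fun U U' h => Subtype.ext (hw h)) (fun U => ?_) (fun U U' h => ?_)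
    · rw [shiftedPartial_apply, if_pos ⟨Finset.sdiff_subset,
          Finset.subset_compl_iff_disjoint_right.1 (hU U).1⟩,
        Finset.sdiff_sdiff_eq_self (hGU U), Finset.union_comm, Finset.sdiff_union_inter]
      exact (h𝒲 _).1 (h𝒢𝒲 (hG U))
    · exact sum_le_sum_of_shiftedPartial_ne_zero (hGU U)
        (fun W hW => h𝒢_max (G U) (hG U) W ((h𝒲 W).2 hW)) h
  calc 𝒰.card = Fintype.card 𝒰 := (Fintype.card_coe 𝒰).symm
    _ ≤ _ := by
      rw [← finrank_span_eq_card hli]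
      refine Submodule.finrank_mono (Submodule.span_mono ?_)
      rintro _ ⟨U, rfl⟩
      refine ⟨_, Finset.mem_powersetCard.2 ⟨Finset.inter_subset_right, hr _ (h𝒢𝒲 (hG U))⟩, _,
        Finset.mem_powersetCard.2 ⟨Finset.sdiff_subset.trans (hU U).1, ?_⟩, rfl⟩
      rw [Finset.card_sdiff_of_subset (hGU U), hm _ (h𝒢𝒲 (hG U)), (hU U).2]
      omega

end MeasureLowerBound

section Counting

theorem sum_card_sq_le_card_biUnion_mul {ι α : Type*} [DecidableEq α] (I : Finset ι)
    (A : ι → Finset α) :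
    (∑ i ∈ I, (A i).card) ^ 2 ≤
      (I.biUnion A).card * ∑ i ∈ I, ∑ j ∈ I, (A i ∩ A j).card := by
  have hcard (B : Finset α) (hB : B ⊆ I.biUnion A) :
      B.card = ∑ x ∈ I.biUnion A, if x ∈ B then 1 else 0 := by
    rw [← Finset.card_filter, Finset.filter_mem_eq_inter, Finset.inter_eq_right.2 hB]
  have hsub {i : ι} (hi : i ∈ I) : A i ⊆ I.biUnion A := Finset.subset_biUnion_of_mem A hi
  calc (∑ i ∈ I, (A i).card) ^ 2
      = (∑ x ∈ I.biUnion A, ∑ i ∈ I, if x ∈ A i then 1 else 0) ^ 2 := by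
        rw [Finset.sum_comm, Finset.sum_congr rfl fun i hi => hcard (A i) (hsub hi)]
    _ ≤ (I.biUnion A).card * ∑ x ∈ I.biUnion A, (∑ i ∈ I, if x ∈ A i then 1 else 0) ^ 2 :=
        sq_sum_le_card_mul_sum_sq
    _ = (I.biUnion A).card * ∑ i ∈ I, ∑ j ∈ I, (A i ∩ A j).card := by
        simp only [sq, Finset.sum_mul_sum]
        rw [Finset.sum_comm]
        congr 1
        refine Finset.sum_congr rfl fun i hi => ?_
        rw [Finset.sum_comm]
        refine Finset.sum_congr rfl fun j _ => ?_
        rw [hcard _ (Finset.inter_subset_left.trans (hsub hi))]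
        exact Finset.sum_congr rfl fun x _ => by grind

theorem mul_le_two_mul_card_biUnion {ι α : Type*} [DecidableEq α] {I : Finset ι}
    {A : ι → Finset α} {N a b : ℕ} (hN : N ≤ I.card) (ha : ∀ i ∈ I, (A i).card = a)
    (hb : ∀ i ∈ I, ∀ j ∈ I, i ≠ j → (A i ∩ A j).card ≤ b) (hab : N * b ≤ a) :
    N * a ≤ 2 * (I.biUnion A).card := by
  classical
  obtain ⟨J, hJI, rfl⟩ := Finset.exists_subset_card_eq hN
  have hrow : ∀ i ∈ J, ∑ j ∈ J, (A i ∩ A j).card ≤ 2 * a := fun i hi => by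
    rw [← Finset.add_sum_erase _ _ hi, Finset.inter_self, ha i (hJI hi), two_mul]
    refine Nat.add_le_add_left ((Finset.sum_le_card_nsmul _ _ b fun j hj => ?_).trans ?_) a
    · exact hb i (hJI hi) j (hJI (Finset.mem_of_mem_erase hj)) (Finset.ne_of_mem_erase hj).symm
    · rw [smul_eq_mul]
      exact (Nat.mul_le_mul_right b (Finset.card_erase_le)).trans hab
  have hsq : (J.card * a) * (J.card * a) ≤ 2 * (J.biUnion A).card * (J.card * a) := calc
    _ = (∑ i ∈ J, (A i).card) ^ 2 := by
        rw [Finset.sum_congr rfl fun i hi => ha i (hJI hi), Finset.sum_const, smul_eq_mul, sq]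
    _ ≤ (J.biUnion A).card * ∑ i ∈ J, ∑ j ∈ J, (A i ∩ A j).card :=
        sum_card_sq_le_card_biUnion_mul J A
    _ ≤ (J.biUnion A).card * ∑ i ∈ J, 2 * a := by gcongr with i hi; exact hrow i hi
    _ = 2 * (J.biUnion A).card * (J.card * a) := by
        rw [Finset.sum_const, smul_eq_mul]; ring
  have hmono : (J.biUnion A).card ≤ (I.biUnion A).card :=
    Finset.card_le_card (Finset.biUnion_subset_biUnion_of_subset_left A hJI)
  rcases Nat.eq_zero_or_pos (J.card * a) with h0 | hpos
  · exact h0.le.trans (Nat.zero_le _)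
  · exact (Nat.le_of_mul_le_mul_right hsq hpos).trans (Nat.mul_le_mul_left 2 hmono)

theorem pow_mul_choose_sub_le_choose {q V L : ℕ} (h : q * L ≤ V) {t : ℕ} (ht : t ≤ L) :
    q ^ t * (V - t).choose (L - t) ≤ V.choose L := by
  induction t generalizing V L with
  | zero => simp
  | succ t ih =>
    rcases Nat.eq_zero_or_pos q with rfl | hq
    · simp
    obtain _ | L := L
    · omega
    obtain _ | V := V
    · nlinarith
    have hstep : q * V.choose L ≤ (V + 1).choose (L + 1) := by
      refine Nat.le_of_mul_le_mul_right ?_ L.succ_pos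
      rw [← Nat.add_one_mul_choose_eq]
      nlinarith [Nat.zero_le (V.choose L)]
    calc q ^ (t + 1) * (V + 1 - (t + 1)).choose (L + 1 - (t + 1))
        = q * (q ^ t * (V - t).choose (L - t)) := by
          rw [Nat.add_sub_add_right, Nat.add_sub_add_right, pow_succ']; ring
      _ ≤ q * V.choose L := by
          gcongr
          exact ih (by nlinarith) (by omega)
      _ ≤ (V + 1).choose (L + 1) := hstep

theorem choose_add_le_pow_mul_choose {V Q ℓ : ℕ} (h : V ≤ Q * ℓ) (j : ℕ) :
    V.choose (ℓ + j) ≤ Q ^ j * V.choose ℓ := by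
  induction j with
  | zero => simp
  | succ j ih =>
    refine Nat.le_of_mul_le_mul_right ?_ (ℓ + j).succ_pos
    calc V.choose (ℓ + j + 1) * (ℓ + j + 1) = V.choose (ℓ + j) * (V - (ℓ + j)) :=
          Nat.choose_succ_right_eq V (ℓ + j)
      _ ≤ (Q ^ j * V.choose ℓ) * (Q * (ℓ + j + 1)) :=
          Nat.mul_le_mul ih ((Nat.sub_le _ _).trans (h.trans (Nat.mul_le_mul_left Q (by omega))))
      _ = Q ^ (j + 1) * V.choose ℓ * (ℓ + j + 1) := by ring

theorem sum_Icc_choose_le {V Q ℓ : ℕ} (hQ : 1 ≤ Q) (h : V ≤ Q * ℓ) (t : ℕ) :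
    ∑ i ∈ Finset.Icc ℓ (ℓ + t), V.choose i ≤ (t + 1) * (Q ^ t * V.choose ℓ) := by
  have hcard : (Finset.Icc ℓ (ℓ + t)).card = t + 1 := by rw [Nat.card_Icc]; omega
  rw [← hcard, ← smul_eq_mul (Finset.card _)]
  refine Finset.sum_le_card_nsmul _ _ _ fun i hi => ?_
  obtain ⟨hℓi, hit⟩ := Finset.mem_Icc.1 hi
  obtain ⟨j, rfl⟩ := Nat.exists_eq_add_of_le hℓi
  refine (choose_add_le_pow_mul_choose h j).trans (Nat.mul_le_mul_right _ ?_)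
  exact Nat.pow_le_pow_right hQ (by omega)

theorem choose_le_two_pow_mul_choose_sub {V ℓ m : ℕ} (h : 2 * ℓ + m ≤ V) :
    V.choose ℓ ≤ 2 ^ m * (V - m).choose ℓ := by
  induction m generalizing V with
  | zero => simp
  | succ m ih =>
    obtain ⟨V, rfl⟩ : ∃ V', V = V' + 1 := ⟨V - 1, by omega⟩
    have hstep : (V + 1).choose ℓ ≤ 2 * V.choose ℓ := by
      have hpos : 0 < V + 1 - ℓ := by omega
      refine Nat.le_of_mul_le_mul_right ?_ hpos
      rw [← Nat.choose_mul_succ_eq, mul_comm 2, mul_assoc]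
      exact Nat.mul_le_mul_left _ (by omega)
    calc (V + 1).choose ℓ ≤ 2 * (2 ^ m * (V - m).choose ℓ) :=
          hstep.trans (Nat.mul_le_mul_left 2 (ih (by omega)))
      _ = 2 ^ (m + 1) * (V + 1 - (m + 1)).choose ℓ := by
          rw [Nat.add_sub_add_right]; ring

end Counting

section MeasureBounds

variable {σ K : Type*} [DecidableEq σ] [Fintype σ] [Field K]

theorem card_filter_sdiff_subset_inter_le {Y G G' : Finset σ} {d m ℓ : ℕ} (hm : m ≤ ℓ)
    (hG : (G \ Y).card = m) (hG' : (G' \ Y).card = m) (hd : (G ∩ G').card ≤ d) :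
    ({U ∈ Yᶜ.powersetCard (ℓ + m) | G \ Y ⊆ U} ∩
        {U ∈ Yᶜ.powersetCard (ℓ + m) | G' \ Y ⊆ U}).card ≤
      (Yᶜ.card - m - (m - d)).choose (ℓ - (m - d)) := by
  have hunion : m + (m - d) ≤ (G \ Y ∪ G' \ Y).card := by
    have hle : ((G \ Y) ∩ (G' \ Y)).card ≤ d :=
      (Finset.card_le_card (Finset.inter_subset_inter Finset.sdiff_subset
        Finset.sdiff_subset)).trans hd
    have := Finset.card_union_add_card_inter (G \ Y) (G' \ Y)
    have := Finset.card_le_card (Finset.subset_union_left : G \ Y ⊆ G \ Y ∪ G' \ Y)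
    omega
  obtain ⟨S, hS, hS_card⟩ := Finset.exists_subset_card_eq hunion
  have hSY : S ⊆ Yᶜ := fun x hx => Finset.mem_compl.2 <| by grind
  calc _ ≤ {U ∈ Yᶜ.powersetCard (ℓ + m) | S ⊆ U}.card := by
        refine Finset.card_le_card fun U hU => ?_
        rw [Finset.mem_inter, Finset.mem_filter, Finset.mem_filter] at hU
        exact Finset.mem_filter.2 ⟨hU.1.1, hS.trans (Finset.union_subset hU.1.2 hU.2.2)⟩
    _ = _ := by
        rw [Finset.card_filter_powersetCard_subset _ _ _ hSY (by omega), hS_card]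
        congr 1 <;> omega

theorem pow_mul_choose_le_two_mul_finrank_shiftedPartials {p : MvPolynomial σ K}
    {𝒲 : Finset (Finset σ)} (h𝒲 : ∀ W, W ∈ 𝒲 ↔ coeff (sqfreeExp W) p ≠ 0) {Y : Finset σ}
    {r m d q ℓ : ℕ} (hr : ∀ W ∈ 𝒲, (W ∩ Y).card = r) (hm : ∀ W ∈ 𝒲, (W \ Y).card = m)
    (hd : ∀ W ∈ 𝒲, ∀ W' ∈ 𝒲, W ≠ W' → (W ∩ W').card ≤ d)
    (hq : 1 ≤ q) (hmℓ : m ≤ ℓ) (hY : q * (ℓ + m) ≤ Yᶜ.card)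
    (himage : q ^ (m - d) ≤ (𝒲.image (· ∩ Y)).card) :
    q ^ (m - d) * (Yᶜ.card - m).choose ℓ ≤
      2 * Module.finrank K (shiftedPartials Y r ℓ p) := by
  obtain ⟨𝒢, h𝒢𝒲, h𝒢_card, h𝒢⟩ :=
    exists_card_filter_le_finrank_shiftedPartials h𝒲 hr hm ℓ
  refine le_trans ?_ (Nat.mul_le_mul_left 2 h𝒢)
  have hbiUnion : {U ∈ Yᶜ.powersetCard (ℓ + m) | ∃ G ∈ 𝒢, G \ Y ⊆ U} =
      𝒢.biUnion fun G => {U ∈ Yᶜ.powersetCard (ℓ + m) | G \ Y ⊆ U} := by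
    ext U
    simp only [Finset.mem_filter, Finset.mem_biUnion]
    tauto
  rw [hbiUnion]
  have hVm : q * ℓ ≤ Yᶜ.card - m := by
    have := Nat.le_mul_of_pos_left m hq
    rw [mul_add] at hY
    omega
  refine mul_le_two_mul_card_biUnion (himage.trans_eq h𝒢_card.symm) (fun G hG => ?_)
    (fun G hG G' hG' hne => card_filter_sdiff_subset_inter_le hmℓ (hm G (h𝒢𝒲 hG))
      (hm G' (h𝒢𝒲 hG')) (hd G (h𝒢𝒲 hG) G' (h𝒢𝒲 hG') hne))
    (pow_mul_choose_sub_le_choose hVm (by omega))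
  rw [Finset.card_filter_powersetCard_subset, hm G (h𝒢𝒲 hG), Nat.add_sub_cancel]
  · exact fun x hx => Finset.mem_compl.2 (Finset.mem_sdiff.1 hx).2
  · rw [hm G (h𝒢𝒲 hG)]
    omega

end MeasureBounds

section Graphs

variable {ι κ : Type*} [Fintype ι] [Fintype κ] [DecidableEq κ]

/-- The graph of `f` as a finite set of pairs. -/
def graphFinset (f : ι → κ) : Finset (ι × κ) :=
  {x | f x.1 = x.2}

theorem mem_graphFinset {f : ι → κ} {x : ι × κ} : x ∈ graphFinset f ↔ f x.1 = x.2 := by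
  simp [graphFinset]

theorem graphFinset_injective : Function.Injective (graphFinset : (ι → κ) → Finset (ι × κ)) :=
  fun f g h => funext fun i =>
    (mem_graphFinset.1 (h ▸ mem_graphFinset.2 rfl : (i, f i) ∈ graphFinset g)).symm

theorem prod_X_graph_eq_prod_X_graphFinset {R : Type*} [CommSemiring R] (f : ι → κ) :
    ∏ i, (X (i, f i) : MvPolynomial (ι × κ) R) = ∏ x ∈ graphFinset f, X x :=
  Finset.prod_bij (fun i _ => (i, f i)) (fun _ _ => mem_graphFinset.2 rfl)
    (fun _ _ _ _ h => congrArg Prod.fst h)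
    (fun x hx => ⟨x.1, Finset.mem_univ _, Prod.ext rfl (mem_graphFinset.1 hx)⟩) (fun _ _ => rfl)

theorem card_graphFinset_inter_product [DecidableEq ι] (f : ι → κ) (R : Finset ι) :
    (graphFinset f ∩ R ×ˢ Finset.univ).card = R.card := by
  refine Finset.card_bij' (fun x _ => x.1) (fun i _ => (i, f i)) ?_ ?_ ?_ (fun _ _ => rfl)
  · exact fun x hx => (Finset.mem_product.1 (Finset.mem_inter.1 hx).2).1
  · exact fun i hi => Finset.mem_inter.2
      ⟨mem_graphFinset.2 rfl, Finset.mem_product.2 ⟨hi, Finset.mem_univ _⟩⟩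
  · exact fun x hx => Prod.ext rfl (mem_graphFinset.1 (Finset.mem_inter.1 hx).1)

theorem card_graphFinset (f : ι → κ) : (graphFinset f).card = Fintype.card ι := by
  classical simpa using card_graphFinset_inter_product f Finset.univ

theorem card_graphFinset_sdiff_product [DecidableEq ι] (f : ι → κ) (R : Finset ι) :
    (graphFinset f \ R ×ˢ Finset.univ).card = Fintype.card ι - R.card := by
  rw [Finset.card_sdiff, Finset.inter_comm, card_graphFinset_inter_product, card_graphFinset]

theorem card_graphFinset_inter [DecidableEq ι] (f g : ι → κ) :
    (graphFinset f ∩ graphFinset g).card = ({i | f i = g i} : Finset ι).card := by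
  refine Finset.card_bij' (fun x _ => x.1) (fun i _ => (i, f i)) ?_ ?_ ?_ (fun _ _ => rfl)
  all_goals
    simp only [Finset.mem_inter, mem_graphFinset, Finset.mem_filter, Finset.mem_univ, true_and]
    grind

end Graphs

section NisanWigderson

variable {F : Type*} [Field F]

/-- The values of the polynomial `∑ j, a j * z ^ j` of degree less than `d`. -/
def evalCoeffs {d : ℕ} (a : Fin d → F) (i : F) : F :=
  ∑ j, a j * i ^ (j : ℕ)

theorem eq_of_evalCoeffs_eqOn {d : ℕ} {a b : Fin d → F} {I : Finset F} (hI : d ≤ I.card)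
    (h : ∀ i ∈ I, evalCoeffs a i = evalCoeffs b i) : a = b := by
  obtain ⟨J, hJI, rfl⟩ := Finset.exists_subset_card_eq hI
  rw [← sub_eq_zero]
  refine Matrix.eq_zero_of_forall_index_sum_mul_pow_eq_zero
    (f := fun l => (J.equivFin.symm l : F))
    (Subtype.val_injective.comp J.equivFin.symm.injective) fun l => ?_
  have := h _ (hJI (J.equivFin.symm l).2)
  simp only [Pi.sub_apply, sub_mul, Finset.sum_sub_distrib]
  exact sub_eq_zero.2 this

variable [Fintype F]

theorem evalCoeffs_injective {d : ℕ} (hd : d ≤ Fintype.card F) :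
    Function.Injective (evalCoeffs : (Fin d → F) → F → F) :=
  fun _ _ h => eq_of_evalCoeffs_eqOn (I := Finset.univ) hd fun i _ => congrFun h i

/-- The Nisan–Wigderson polynomial over `F`, with coefficients in an arbitrary ring `R`. -/
noncomputable def nisanWigderson (F R : Type*) [Field F] [Fintype F] [CommSemiring R] (d : ℕ) :
    MvPolynomial (F × F) R :=
  ∑ a : Fin d → F, ∏ i, X (i, evalCoeffs a i)

variable [DecidableEq F]

theorem card_graphFinset_evalCoeffs_inter_lt {d : ℕ} {a b : Fin d → F} (hab : a ≠ b) :
    (graphFinset (evalCoeffs a) ∩ graphFinset (evalCoeffs b)).card < d := by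
  rw [card_graphFinset_inter]
  by_contra! h
  exact hab (eq_of_evalCoeffs_eqOn h fun i hi => (Finset.mem_filter.1 hi).2)

theorem coeff_sqfreeExp_nisanWigderson_ne_zero_iff {R : Type*} [CommSemiring R] [Nontrivial R]
    {d : ℕ} (hd : d ≤ Fintype.card F) (W : Finset (F × F)) :
    coeff (sqfreeExp W) (nisanWigderson F R d) ≠ 0 ↔
      ∃ a : Fin d → F, graphFinset (evalCoeffs a) = W := by
  have hcoeff (a : Fin d → F) : coeff (sqfreeExp W) (∏ i, X (i, evalCoeffs a i) : MvPolynomial _ R)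
      = if graphFinset (evalCoeffs a) = W then 1 else 0 := by
    simp only [prod_X_graph_eq_prod_X_graphFinset, prod_X_eq_monomial_sqfreeExp, coeff_monomial,
      sqfreeExp_injective.eq_iff]
  simp only [nisanWigderson, coeff_sum, hcoeff]
  constructor
  · intro h
    obtain ⟨a, -, ha⟩ := Finset.exists_ne_zero_of_sum_ne_zero h
    exact ⟨a, (ite_ne_right_iff.1 ha).1⟩
  · rintro ⟨a, rfl⟩
    have hinj (b : Fin d → F) : graphFinset (evalCoeffs b) = graphFinset (evalCoeffs a) ↔ b = a :=
      (graphFinset_injective.comp (evalCoeffs_injective hd)).eq_iff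
    simp [hinj]

theorem card_filter_subset_graphFinset_evalCoeffs_mul_le {d : ℕ} (hd : d ≤ Fintype.card F)
    {S : Finset (F × F)} (hS : S.card ≤ d) :
    ({a : Fin d → F | S ⊆ graphFinset (evalCoeffs a)} : Finset _).card * Fintype.card F ^ S.card ≤
      Fintype.card F ^ d := by
  obtain hempty | ⟨a, ha⟩ :=
    ({a : Fin d → F | S ⊆ graphFinset (evalCoeffs a)} : Finset _).eq_empty_or_nonempty
  · simp [hempty]
  simp only [Finset.mem_filter_univ] at ha
  have hfst : (S.image Prod.fst).card = S.card := Finset.card_image_of_injOn fun x hx y hy h =>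
    Prod.ext h <| by rw [← mem_graphFinset.1 (ha hx), ← mem_graphFinset.1 (ha hy), h]
  obtain ⟨I, hSI, hI⟩ := Finset.exists_superset_card_eq (hfst.le.trans hS) hd
  have hle : ({a : Fin d → F | S ⊆ graphFinset (evalCoeffs a)} : Finset _).card ≤
      Fintype.card (↥(I \ S.image Prod.fst) → F) := by
    refine Finset.card_le_card_of_injOn (t := Finset.univ) (fun a i => evalCoeffs a i)
      (fun _ _ => Finset.mem_univ _) fun a ha b hb h => eq_of_evalCoeffs_eqOn hI.ge fun i hi => ?_
    simp only [Finset.mem_coe, Finset.mem_filter_univ] at ha hb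
    by_cases hiS : i ∈ S.image Prod.fst
    · obtain ⟨x, hx, rfl⟩ := Finset.mem_image.1 hiS
      rw [mem_graphFinset.1 (ha hx), mem_graphFinset.1 (hb hx)]
    · exact congrFun h ⟨i, Finset.mem_sdiff.2 ⟨hi, hiS⟩⟩
  rw [Fintype.card_fun, Fintype.card_coe, Finset.card_sdiff_of_subset hSI, hI, hfst] at hle
  calc _ ≤ Fintype.card F ^ (d - S.card) * Fintype.card F ^ S.card := Nat.mul_le_mul_right _ hle
    _ = Fintype.card F ^ d := by rw [← pow_add, Nat.sub_add_cancel hS]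

end NisanWigderson

section RandomRestriction

open Fintype

theorem two_mul_card_filter_card_fiber_lt_le {α β : Type*} [Fintype α] [Fintype β] [DecidableEq β]
    (φ : α → β) :
    2 * ({a | 2 * card β * ({b | φ b = φ a} : Finset α).card < card α} : Finset α).card ≤
      card α := by
  set B : Finset α := {a | 2 * card β * ({b | φ b = φ a} : Finset α).card < card α} with hB
  have hfiber (y : β) : 2 * card β * ({a ∈ B | φ a = y} : Finset α).card ≤ card α := by
    obtain hempty | ⟨a, ha⟩ := ({a ∈ B | φ a = y} : Finset α).eq_empty_or_nonempty
    · simp [hempty]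
    obtain ⟨haB, rfl⟩ := Finset.mem_filter.1 ha
    rw [hB, Finset.mem_filter_univ] at haB
    refine le_trans (Nat.mul_le_mul_left _ (Finset.card_le_card ?_)) haB.le
    exact Finset.filter_subset_filter _ (Finset.subset_univ _)
  obtain hα | ⟨⟨a⟩⟩ := isEmpty_or_nonempty α
  · simp [Finset.eq_empty_of_isEmpty B]
  refine Nat.le_of_mul_le_mul_left ?_ (card_pos_iff.2 ⟨φ a⟩)
  calc card β * (2 * B.card) = ∑ y, 2 * card β * ({a ∈ B | φ a = y} : Finset α).card := by
        rw [← Finset.mul_sum, ← Finset.card_eq_sum_card_fiberwise fun _ _ => Finset.mem_univ _]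
        ring
    _ ≤ ∑ _ : β, card α := Finset.sum_le_sum fun y _ => hfiber y
    _ = card β * card α := by simp

variable {ι κ C : Type*} [Fintype ι] [Fintype κ] [DecidableEq C]

/-- The variables left alive by a colouring `h` of the grid `ι × κ` and a function `f`: those
whose colour agrees with that of the point of the graph of `f` in the same row. -/
def alive (h : ι × κ → C) (f : ι → κ) : Finset (ι × κ) :=
  {x | h x = h (x.1, f x.1)}

theorem mem_alive {h : ι × κ → C} {f : ι → κ} {x : ι × κ} :
    x ∈ alive h f ↔ h x = h (x.1, f x.1) := by
  simp [alive]

variable [DecidableEq κ]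

theorem graphFinset_subset_alive {h : ι × κ → C} {f g : ι → κ} :
    graphFinset g ⊆ alive h f ↔ (fun i => h (i, g i)) = fun i => h (i, f i) := by
  simp [Finset.subset_iff, mem_graphFinset, mem_alive, funext_iff]

variable [DecidableEq ι] [Fintype C]

theorem card_filter_subset_alive_mul_le (f : ι → κ) (S : Finset (ι × κ)) :
    ({h : ι × κ → C | S ⊆ alive h f} : Finset _).card * card C ^ (S \ graphFinset f).card ≤
      card C ^ card (ι × κ) := by
  have hle : ({h : ι × κ → C | S ⊆ alive h f} : Finset _).card ≤
      card (↥(S \ graphFinset f)ᶜ → C) := by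
    refine Finset.card_le_card_of_injOn (t := Finset.univ) (fun h x => h x)
      (fun _ _ => Finset.mem_univ _) fun h hh h' hh' heq => funext fun x => ?_
    simp only [Finset.mem_coe, Finset.mem_filter_univ] at hh hh'
    have hfree (y) (hy : y ∉ S \ graphFinset f) : h y = h' y :=
      congrFun heq ⟨y, Finset.mem_compl.2 hy⟩
    by_cases hx : x ∈ S \ graphFinset f
    · have hxS := (Finset.mem_sdiff.1 hx).1
      rw [mem_alive.1 (hh hxS), mem_alive.1 (hh' hxS)]
      exact hfree _ fun h => (Finset.mem_sdiff.1 h).2 (mem_graphFinset.2 rfl)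
    · exact hfree x hx
  rw [card_fun, card_coe, Finset.card_compl] at hle
  calc _ ≤ card C ^ (card (ι × κ) - (S \ graphFinset f).card) *
        card C ^ (S \ graphFinset f).card := Nat.mul_le_mul_right _ hle
    _ = card C ^ card (ι × κ) := by rw [← pow_add, Nat.sub_add_cancel (Finset.card_le_univ _)]

variable {Ω : Type*} [Fintype Ω] {f : Ω → ι → κ}

theorem card_filter_subset_alive_prod_mul_le {S : Finset (ι × κ)}
    (hf : ∀ S' ⊆ S, ({ω | S' ⊆ graphFinset (f ω)} : Finset Ω).card * card C ^ S'.card ≤ card Ω) :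
    ({z : Ω × (ι × κ → C) | S ⊆ alive z.2 (f z.1)} : Finset _).card * card C ^ S.card ≤
      2 ^ S.card * card (Ω × (ι × κ → C)) := by
  have hω (ω : Ω) : ({h : ι × κ → C | S ⊆ alive h (f ω)} : Finset _).card * card C ^ S.card ≤
      card C ^ card (ι × κ) *
        ∑ S' ∈ S.powerset, if S' ⊆ graphFinset (f ω) then card C ^ S'.card else 0 := by
    rw [← Finset.card_sdiff_add_card_inter S (graphFinset (f ω)), pow_add, ← mul_assoc]
    refine Nat.mul_le_mul (card_filter_subset_alive_mul_le (f ω) S) ?_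
    have := Finset.single_le_sum (s := S.powerset)
      (f := fun S' => if S' ⊆ graphFinset (f ω) then card C ^ S'.card else 0)
      (fun _ _ => Nat.zero_le _) (a := S ∩ graphFinset (f ω))
      (Finset.mem_powerset.2 Finset.inter_subset_left)
    simpa only [Finset.inter_subset_right, if_true] using this
  have hcount : ∀ S' ∈ S.powerset,
      (∑ ω, if S' ⊆ graphFinset (f ω) then card C ^ S'.card else 0) ≤ card Ω := fun S' hS' => by
    rw [← Finset.sum_filter, Finset.sum_const, smul_eq_mul]
    exact hf S' (Finset.mem_powerset.1 hS')
  calc ({z : Ω × (ι × κ → C) | S ⊆ alive z.2 (f z.1)} : Finset _).card * card C ^ S.card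
      = ∑ ω, ({h : ι × κ → C | S ⊆ alive h (f ω)} : Finset _).card * card C ^ S.card := by
        simp only [Finset.card_filter, sum_prod_type, Finset.sum_mul]
    _ ≤ ∑ ω, card C ^ card (ι × κ) *
        ∑ S' ∈ S.powerset, if S' ⊆ graphFinset (f ω) then card C ^ S'.card else 0 :=
      Finset.sum_le_sum fun ω _ => hω ω
    _ = card C ^ card (ι × κ) *
        ∑ S' ∈ S.powerset, ∑ ω, if S' ⊆ graphFinset (f ω) then card C ^ S'.card else 0 := by
      rw [← Finset.mul_sum, Finset.sum_comm]
    _ ≤ card C ^ card (ι × κ) * ∑ _ ∈ S.powerset, card Ω :=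
      Nat.mul_le_mul_left _ (Finset.sum_le_sum hcount)
    _ = 2 ^ S.card * card (Ω × (ι × κ → C)) := by
      rw [Finset.sum_const, Finset.card_powerset, smul_eq_mul, card_prod Ω, card_fun]
      ring

theorem two_mul_card_filter_card_graphFinset_subset_alive_lt_le (f : Ω → ι → κ) :
    2 * ({z | 2 * card C ^ card ι *
      ({ω | graphFinset (f ω) ⊆ alive z.2 (f z.1)} : Finset Ω).card < card Ω} :
        Finset (Ω × (ι × κ → C))).card ≤ card (Ω × (ι × κ → C)) := by
  have hh (h : ι × κ → C) := two_mul_card_filter_card_fiber_lt_le fun ω i => h (i, f ω i)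
  simp only [card_fun, ← graphFinset_subset_alive] at hh
  calc _ = ∑ h : ι × κ → C, 2 * ({ω₀ | 2 * card C ^ card ι *
        ({ω | graphFinset (f ω) ⊆ alive h (f ω₀)} : Finset Ω).card < card Ω} : Finset Ω).card := by
        simp only [Finset.card_filter, sum_prod_type_right, Finset.mul_sum]
    _ ≤ ∑ _ : ι × κ → C, card Ω := Finset.sum_le_sum fun h _ => hh h
    _ = card (Ω × (ι × κ → C)) := by simp [mul_comm]

theorem exists_large_fiber_and_card_alive_lt [Nonempty Ω] [Nonempty C] {t : ℕ}
    {𝒮 : Finset (Finset (ι × κ))}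
    (hf : ∀ S : Finset (ι × κ), S.card ≤ t →
      ({ω | S ⊆ graphFinset (f ω)} : Finset Ω).card * card C ^ S.card ≤ card Ω)
    (h𝒮 : 2 * 𝒮.card * 2 ^ t < card C ^ t) :
    ∃ (ω : Ω) (h : ι × κ → C),
      card Ω ≤ 2 * card C ^ card ι *
        ({ω' | graphFinset (f ω') ⊆ alive h (f ω)} : Finset Ω).card ∧
      ∀ S ∈ 𝒮, S ⊆ alive h (f ω) → S.card < t := by
  classical
  by_contra! hcon
  set small : Finset (Ω × (ι × κ → C)) := {z | 2 * card C ^ card ι *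
    ({ω | graphFinset (f ω) ⊆ alive z.2 (f z.1)} : Finset Ω).card < card Ω} with hsmall
  let surviving (S : Finset (ι × κ)) : Finset (Ω × (ι × κ → C)) := {z | S ⊆ alive z.2 (f z.1)}
  have hcover : Finset.univ ⊆ small ∪ {S ∈ 𝒮 | t ≤ S.card}.biUnion surviving := by
    rintro ⟨ω, h⟩ -
    by_cases hz : (ω, h) ∈ small
    · exact Finset.mem_union_left _ hz
    rw [hsmall, Finset.mem_filter_univ, not_lt] at hz
    obtain ⟨S, hS, halive, ht⟩ := hcon ω h hz
    exact Finset.mem_union_right _ <| Finset.mem_biUnion.2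
      ⟨S, Finset.mem_filter.2 ⟨hS, ht⟩, Finset.mem_filter.2 ⟨Finset.mem_univ _, halive⟩⟩
  have hsurviving (S) (hS : S ∈ ({S ∈ 𝒮 | t ≤ S.card} : Finset _)) :
      (surviving S).card * card C ^ t ≤ 2 ^ t * card (Ω × (ι × κ → C)) := by
    obtain ⟨S', hS'S, rfl⟩ := Finset.exists_subset_card_eq (Finset.mem_filter.1 hS).2
    refine le_trans (Nat.mul_le_mul_right _ (Finset.card_le_card ?_))
      (card_filter_subset_alive_prod_mul_le fun S'' hS'' => hf S'' (Finset.card_le_card hS''))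
    exact Finset.monotone_filter_right _ fun z _ hz => hS'S.trans hz
  have hC : 0 < card C ^ t := pos_of_gt h𝒮
  have htotal : 0 < card (Ω × (ι × κ → C)) := card_pos
  have hsum : (∑ S ∈ 𝒮 with t ≤ S.card, (surviving S).card) * card C ^ t ≤
      𝒮.card * (2 ^ t * card (Ω × (ι × κ → C))) := by
    rw [Finset.sum_mul]
    refine (Finset.sum_le_card_nsmul _ _ _ hsurviving).trans ?_
    exact Nat.mul_le_mul_right _ (Finset.card_filter_le _ _)
  have hle : card (Ω × (ι × κ → C)) ≤
      small.card + ∑ S ∈ 𝒮 with t ≤ S.card, (surviving S).card := by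
    rw [← Finset.card_univ]
    exact (Finset.card_le_card hcover).trans <| (Finset.card_union_le _ _).trans <|
      Nat.add_le_add_left Finset.card_biUnion_le _
  have hsmall_card : 2 * small.card ≤ card (Ω × (ι × κ → C)) :=
    two_mul_card_filter_card_graphFinset_subset_alive_lt_le f
  nlinarith [Nat.mul_lt_mul_of_pos_right h𝒮 htotal]

end RandomRestriction

section Decompositions

variable {σ K : Type*} [DecidableEq σ] [Fintype σ] [Field K]
variable {ι : Type*} [Fintype ι] {κ : ι → Type*} [∀ i, Fintype (κ i)]
  {Q : ∀ i, κ i → MvPolynomial σ K} {n s : ℕ}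

theorem finrank_shiftedPartials_sum_prod_le (hn : ∀ i, ∑ j, (Q i j).totalDegree ≤ n)
    (hs : ∀ i j, ∀ m ∈ (Q i j).support, m.support.card ≤ s) (Y : Finset σ) (r ℓ : ℕ) :
    Module.finrank K (shiftedPartials Y r ℓ (∑ i, ∏ j, Q i j)) ≤
      Fintype.card ι * (2 ^ n * ∑ i ∈ Finset.Icc ℓ (ℓ + r * s), (Yᶜ.card).choose i) := by
  refine (finrank_shiftedPartials_sum_le _ Y r ℓ _).trans ?_
  refine (Finset.sum_le_card_nsmul _ _ _ fun i _ => ?_).trans_eq (smul_eq_mul _ _)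
  exact (finrank_shiftedPartials_prod_le (hs i) Y r ℓ).trans <|
    Nat.mul_le_mul_right _ (Nat.pow_le_pow_right two_pos (hn i))

theorem pow_le_of_eq_sum_prod (hn : ∀ i, ∑ j, (Q i j).totalDegree ≤ n)
    (hs : ∀ i j, ∀ m ∈ (Q i j).support, m.support.card ≤ s)
    {p : MvPolynomial σ K} (hp : p = ∑ i, ∏ j, Q i j)
    {𝒲 : Finset (Finset σ)} (h𝒲 : ∀ W, W ∈ 𝒲 ↔ coeff (sqfreeExp W) p ≠ 0) {Y : Finset σ}
    {r m d q ℓ : ℕ} (hr : ∀ W ∈ 𝒲, (W ∩ Y).card = r) (hm : ∀ W ∈ 𝒲, (W \ Y).card = m)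
    (hd : ∀ W ∈ 𝒲, ∀ W' ∈ 𝒲, W ≠ W' → (W ∩ W').card ≤ d)
    (hq : 2 ≤ q) (hY : q * (ℓ + m) ≤ Yᶜ.card) (hY' : Yᶜ.card ≤ 2 * q * ℓ)
    (himage : q ^ (m - d) ≤ (𝒲.image (· ∩ Y)).card) :
    q ^ (m - d) ≤
      2 * (Fintype.card ι * (2 ^ n * ((r * s + 1) * ((2 * q) ^ (r * s) * 2 ^ m)))) := by
  have hmℓ : m ≤ ℓ := by
    have : ℓ + m ≤ 2 * ℓ :=
      Nat.le_of_mul_le_mul_left (hY.trans (hY'.trans_eq (by ring))) (two_pos.trans_le hq)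
    omega
  have hV : 2 * (ℓ + m) ≤ Yᶜ.card := (Nat.mul_le_mul_right _ hq).trans hY
  have hchoose : 0 < (Yᶜ.card - m).choose ℓ := Nat.choose_pos (by omega)
  refine Nat.le_of_mul_le_mul_right ?_ hchoose
  calc q ^ (m - d) * (Yᶜ.card - m).choose ℓ
      ≤ 2 * Module.finrank K (shiftedPartials Y r ℓ p) :=
        pow_mul_choose_le_two_mul_finrank_shiftedPartials h𝒲 hr hm hd (by omega) hmℓ hY himage
    _ ≤ 2 * (Fintype.card ι *
          (2 ^ n * ∑ i ∈ Finset.Icc ℓ (ℓ + r * s), (Yᶜ.card).choose i)) := by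
        rw [hp]
        exact Nat.mul_le_mul_left 2 (finrank_shiftedPartials_sum_prod_le hn hs Y r ℓ)
    _ ≤ 2 * (Fintype.card ι * (2 ^ n * ((r * s + 1) *
          ((2 * q) ^ (r * s) * (2 ^ m * (Yᶜ.card - m).choose ℓ))))) := by
        gcongr
        exact (sum_Icc_choose_le (by omega) hY' _).trans
          (by gcongr; exact choose_le_two_pow_mul_choose_sub (by omega))
    _ = _ := by ring

end Decompositions

section Blocks

theorem exists_le_card_image_filter {σ γ : Type*} [DecidableEq σ] [Fintype γ] [DecidableEq γ]
    [Nonempty γ] (c : σ → γ) {𝒲 : Finset (Finset σ)} {M : ℕ}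
    (hM : M ^ Fintype.card γ ≤ 𝒲.card) :
    ∃ t, M ≤ (𝒲.image fun W => W.filter (c · = t)).card := by
  obtain ⟨t, ht⟩ := Finite.exists_max fun t => (𝒲.image fun W => W.filter (c · = t)).card
  refine ⟨t, (Nat.pow_le_pow_iff_left Fintype.card_ne_zero).1 (hM.trans ?_)⟩
  calc 𝒲.card ≤ ∏ t, (𝒲.image fun W => W.filter (c · = t)).card := by
        rw [← Fintype.card_piFinset]
        refine Finset.card_le_card_of_injOn (fun W t => W.filter (c · = t))
          (fun W hW => Fintype.mem_piFinset.2 fun t => Finset.mem_image_of_mem _ hW)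
          fun W _ W' _ heq => Finset.ext fun x => ?_
        have hx : W.filter (c · = c x) = W'.filter (c · = c x) :=
          congrFun heq (c x)
        simpa using Finset.ext_iff.1 hx x
    _ ≤ (𝒲.image fun W => W.filter (c · = t)).card ^ Fintype.card γ :=
        Finset.prod_le_pow_card _ _ _ fun t' _ => ht t'

theorem exists_card_eq_and_le_card_image_inter_product {ι κ : Type*} [Fintype ι] [Fintype κ]
    [DecidableEq ι] [DecidableEq κ] {g r : ℕ} (hι : Fintype.card ι = g * r) (hg : 0 < g)
    {𝒲 : Finset (Finset (ι × κ))} {M : ℕ} (hM : M ^ g ≤ 𝒲.card) :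
    ∃ R : Finset ι, R.card = r ∧ M ≤ (𝒲.image (· ∩ R ×ˢ Finset.univ)).card := by
  let e : ι ≃ Fin g × Fin r := Fintype.equivOfCardEq (by simp [hι])
  have : Nonempty (Fin g) := ⟨⟨0, hg⟩⟩
  obtain ⟨t, ht⟩ := exists_le_card_image_filter (fun x : ι × κ => (e x.1).1)
    (M := M) (𝒲 := 𝒲) (by rwa [Fintype.card_fin])
  refine ⟨({i | (e i).1 = t} : Finset ι), ?_, ?_⟩
  · calc _ = (({t} : Finset (Fin g)) ×ˢ (Finset.univ : Finset (Fin r))).card :=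
          Finset.card_bijective e e.bijective fun i => by
            simp only [Finset.mem_filter_univ, Finset.mem_product, Finset.mem_singleton,
              Finset.mem_univ, and_true]
      _ = r := by simp
  · have hinter (W : Finset (ι × κ)) :
        W ∩ ({i | (e i).1 = t} : Finset ι) ×ˢ Finset.univ = W.filter fun x => (e x.1).1 = t := by
      ext x
      simp
    simpa only [hinter] using ht

end Blocks

section RepresentationBounds

variable {F : Type*} [Field F] [Fintype F]

theorem exists_restriction_evalCoeffs [DecidableEq F] {d t D : ℕ} (hd : d ≤ Fintype.card F)
    (ht : t ≤ d) (hD : 0 < D) (hDF : D ≤ Fintype.card F) {𝒮 : Finset (Finset (F × F))}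
    (h𝒮 : 2 * 𝒮.card * 2 ^ t < D ^ t) :
    ∃ A : Finset (F × F),
      Fintype.card F ^ d ≤ 2 * D ^ Fintype.card F *
        ({a | graphFinset (evalCoeffs a) ⊆ A} : Finset (Fin d → F)).card ∧
      ∀ S ∈ 𝒮, S ⊆ A → S.card < t := by
  have : Nonempty (Fin D) := ⟨⟨0, hD⟩⟩
  obtain ⟨a, h, hlarge, hA⟩ := exists_large_fiber_and_card_alive_lt (C := Fin D)
    (f := (evalCoeffs : (Fin d → F) → F → F)) (t := t) (𝒮 := 𝒮)
    (fun S hS => by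
      rw [Fintype.card_fun, Fintype.card_fin, Fintype.card_fin]
      exact (Nat.mul_le_mul_left _ (Nat.pow_le_pow_left hDF _)).trans
        (card_filter_subset_graphFinset_evalCoeffs_mul_le hd (hS.trans ht)))
    (by rwa [Fintype.card_fin])
  refine ⟨alive h (evalCoeffs a), ?_, hA⟩
  simpa only [Fintype.card_fun, Fintype.card_fin] using hlarge

variable {K : Type*} [Field K] {ι : Type*} [Fintype ι] {κ : ι → Type*} [∀ i, Fintype (κ i)]
  {Q : ∀ i, κ i → MvPolynomial (F × F) K} {d g r q qq m s n : ℕ}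

theorem pow_le_of_restrictVars_nisanWigderson_eq_sum_prod [DecidableEq F]
    (hd : d ≤ Fintype.card F) (hgr : Fintype.card F = g * r) (hg : 0 < g)
    (hqq : Fintype.card F = q * qq) (hq : 2 ≤ q) (hqq_two : 2 ≤ qq)
    (hm : m + r = Fintype.card F) {A : Finset (F × F)}
    (hA : (q ^ (m - d)) ^ g ≤
      ({a | graphFinset (evalCoeffs a) ⊆ A} : Finset (Fin d → F)).card)
    (hQ : restrictVars ↑A (nisanWigderson F K d) = ∑ i, ∏ j, Q i j)
    (hn : ∀ i, ∑ j, (Q i j).totalDegree ≤ n)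
    (hs : ∀ i j, ∀ μ ∈ (Q i j).support, μ.support.card ≤ s) :
    q ^ (m - d) ≤
      2 * (Fintype.card ι * (2 ^ n * ((r * s + 1) * ((2 * q) ^ (r * s) * 2 ^ m)))) := by
  set 𝒲 : Finset (Finset (F × F)) :=
    ({a | graphFinset (evalCoeffs a) ⊆ A} : Finset (Fin d → F)).image
      fun a => graphFinset (evalCoeffs a) with h𝒲_def
  have h𝒲 (W) : W ∈ 𝒲 ↔ coeff (sqfreeExp W) (restrictVars ↑A (nisanWigderson F K d)) ≠ 0 := by
    classical
    rw [coeff_restrictVars, ite_ne_right_iff, coeff_sqfreeExp_nisanWigderson_ne_zero_iff hd,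
      support_sqfreeExp, Finset.coe_subset, h𝒲_def]
    simp only [Finset.mem_image, Finset.mem_filter_univ]
    grind
  have h𝒲_card : (q ^ (m - d)) ^ g ≤ 𝒲.card := by
    have hinj := graphFinset_injective.comp (evalCoeffs_injective hd)
    exact hA.trans_eq (Finset.card_image_of_injective _ hinj).symm
  have hgraph {W} (hW : W ∈ 𝒲) : ∃ a : Fin d → F, graphFinset (evalCoeffs a) = W := by
    obtain ⟨a, -, ha⟩ := Finset.mem_image.1 hW
    exact ⟨a, ha⟩
  obtain ⟨R, rfl, hR⟩ := exists_card_eq_and_le_card_image_inter_product hgr hg h𝒲_card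
  have hY : (R ×ˢ (Finset.univ : Finset F))ᶜ.card = q * (m * (qq - 1) + m) := by
    obtain ⟨c, rfl⟩ : ∃ c, qq = c + 1 := ⟨qq - 1, by omega⟩
    rw [Finset.card_compl, Finset.card_product, Fintype.card_prod, Finset.card_univ,
      ← Nat.sub_mul, ← hm, Nat.add_sub_cancel, hm, hqq]
    simp only [Nat.add_sub_cancel]
    ring
  refine pow_le_of_eq_sum_prod hn hs hQ h𝒲 (fun W hW => ?_) (fun W hW => ?_)
    (fun W hW W' hW' hne => ?_) hq hY.ge ?_ hR
  · obtain ⟨a, rfl⟩ := hgraph hW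
    exact card_graphFinset_inter_product _ R
  · obtain ⟨a, rfl⟩ := hgraph hW
    rw [card_graphFinset_sdiff_product, ← hm, Nat.add_sub_cancel]
  · obtain ⟨a, rfl⟩ := hgraph hW
    obtain ⟨b, rfl⟩ := hgraph hW'
    exact (card_graphFinset_evalCoeffs_inter_lt fun hab => hne (by rw [hab])).le
  · rw [hY, mul_comm 2, mul_assoc]
    refine Nat.mul_le_mul_left q ?_
    have := Nat.le_mul_of_pos_right m (show 0 < qq - 1 by omega)
    omega

theorem pow_le_of_nisanWigderson_eq_sum_prod {D : ℕ} (hd : d ≤ Fintype.card F)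
    (hgr : Fintype.card F = g * r) (hg : 0 < g) (hqq : Fintype.card F = q * qq) (hq : 2 ≤ q)
    (hqq_two : 2 ≤ qq) (hm : m + r = Fintype.card F) (hsd : s + 1 ≤ d) (hD : 0 < D)
    (hDF : D ≤ Fintype.card F)
    (hent : (q ^ (m - d)) ^ g * (2 * D ^ Fintype.card F) ≤ Fintype.card F ^ d)
    (hQ : nisanWigderson F K d = ∑ i, ∏ j, Q i j)
    (hn : ∀ i, ∑ j, (Q i j).totalDegree ≤ n)
    (hkill : 2 * (∑ i, ∑ j, (Q i j).support.card) * 2 ^ (s + 1) < D ^ (s + 1)) :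
    q ^ (m - d) ≤
      2 * (Fintype.card ι * (2 ^ n * ((r * s + 1) * ((2 * q) ^ (r * s) * 2 ^ m)))) := by
  classical
  let 𝒮 : Finset (Finset (F × F)) := Finset.univ.biUnion fun i => Finset.univ.biUnion fun j =>
    (Q i j).support.image Finsupp.support
  have h𝒮 : 𝒮.card ≤ ∑ i, ∑ j, (Q i j).support.card :=
    Finset.card_biUnion_le.trans <| Finset.sum_le_sum fun i _ =>
      Finset.card_biUnion_le.trans <| Finset.sum_le_sum fun j _ => Finset.card_image_le
  obtain ⟨A, hA, hsmall⟩ := exists_restriction_evalCoeffs hd hsd hD hDF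
    (𝒮 := 𝒮) (hkill.trans_le' (by gcongr))
  have hA_card : (q ^ (m - d)) ^ g ≤
      ({a | graphFinset (evalCoeffs a) ⊆ A} : Finset (Fin d → F)).card := by
    refine Nat.le_of_mul_le_mul_left ?_ (show 0 < 2 * D ^ Fintype.card F by positivity)
    rw [mul_comm]
    exact hent.trans hA
  refine pow_le_of_restrictVars_nisanWigderson_eq_sum_prod hd hgr hg hqq hq hqq_two hm hA_card
    (Q := fun i j => restrictVars ↑A (Q i j)) (by rw [hQ, map_sum]; simp only [map_prod])
    (fun i => (Finset.sum_le_sum fun j _ => totalDegree_restrictVars_le _ _).trans (hn i))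
    fun i j μ hμ => ?_
  obtain ⟨hμQ, hμA⟩ := mem_support_restrictVars.1 hμ
  refine Nat.lt_succ_iff.1 (hsmall _ ?_ (Finset.coe_subset.1 hμA))
  exact Finset.mem_biUnion.2 ⟨i, Finset.mem_univ _,
    Finset.mem_biUnion.2 ⟨j, Finset.mem_univ _, Finset.mem_image_of_mem _ hμQ⟩⟩

end RepresentationBounds

section Parameters

variable {F K : Type*} [Field F] [Fintype F] [Field K]
  {ι : Type*} [Fintype ι] {κ : ι → Type*} [∀ i, Fintype (κ i)]
  {Q : ∀ i, κ i → MvPolynomial (F × F) K} {k d : ℕ}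

theorem mul_le_of_two_pow_pow_le {w a n t x m : ℕ} (ht : t ≤ 2 ^ n)
    (h : (2 ^ w) ^ a ≤ 2 * (t * (2 ^ n * ((x + 1) * ((2 * 2 ^ w) ^ x * 2 ^ m))))) :
    w * a ≤ 1 + 2 * n + (w + 2) * x + m := by
  refine (Nat.pow_le_pow_iff_right one_lt_two).1 ?_
  calc 2 ^ (w * a) = (2 ^ w) ^ a := pow_mul ..
    _ ≤ 2 * (t * (2 ^ n * ((x + 1) * ((2 * 2 ^ w) ^ x * 2 ^ m)))) := h
    _ ≤ 2 * (2 ^ n * (2 ^ n * (2 ^ x * ((2 * 2 ^ w) ^ x * 2 ^ m)))) := by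
        gcongr
        exact Nat.lt_two_pow_self
    _ = 2 ^ (1 + 2 * n + (w + 2) * x + m) := by ring

theorem two_pow_le_card_add_sum_card_support {γ w s e B : ℕ} (hF : Fintype.card F = 2 ^ k)
    (hsd : s + 1 ≤ d) (hent : w * 2 ^ k * 2 ^ γ + 1 + e * 2 ^ k ≤ k * d)
    (hgain : w * d + w * 2 ^ (k - γ) + 1 + 3 * 2 ^ k + (w + 2) * (2 ^ (k - γ) * s) < w * 2 ^ k)
    (hkill : B + s + 2 ≤ e * (s + 1)) (hB : B ≤ 2 ^ k)
    (hQ : nisanWigderson F K d = ∑ i, ∏ j, Q i j)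
    (hn : ∀ i, ∑ j, (Q i j).totalDegree ≤ 2 ^ k) :
    2 ^ B ≤ Fintype.card ι + ∑ i, ∑ j, (Q i j).support.card := by
  classical
  by_contra! hsize
  generalize hn_def : 2 ^ k = n at *
  generalize hr_def : 2 ^ (k - γ) = r at *
  have hw : 0 < w := Nat.pos_of_ne_zero fun h => by simp [h] at hgain
  have hn0 : 0 < n := hn_def ▸ Nat.two_pow_pos k
  have hdr : d + r < n := by
    refine Nat.lt_of_mul_lt_mul_left (a := w) ?_
    rw [mul_add]
    omega
  have hkd : k * d ≤ k * n := Nat.mul_le_mul_left _ (by omega)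
  have hek : e ≤ k := Nat.le_of_mul_le_mul_right (hkd.trans' (by omega)) hn0
  have hwγ : w * 2 ^ γ < k := by
    refine Nat.lt_of_mul_lt_mul_right (a := n) (hkd.trans_lt' ?_)
    rw [mul_right_comm]
    omega
  have hwk : w < k := (Nat.le_mul_of_pos_right w (by positivity)).trans_lt hwγ
  have hγk : γ < k := Nat.lt_two_pow_self.trans ((Nat.le_mul_of_pos_left _ hw).trans_lt hwγ)
  obtain ⟨m, hm⟩ : ∃ m, m + r = n := ⟨n - r, by omega⟩
  have hmain := pow_le_of_nisanWigderson_eq_sum_prod (g := 2 ^ γ) (r := r)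
    (q := 2 ^ w) (qq := 2 ^ (k - w)) (m := m) (s := s) (D := 2 ^ e) (by omega)
    (by rw [hF, ← hr_def, ← hn_def, pow_mul_pow_sub _ hγk.le]) (by positivity)
    (by rw [hF, ← hn_def, pow_mul_pow_sub _ hwk.le])
    (Nat.le_self_pow hw.ne' 2) (Nat.le_self_pow (by omega) 2) (by rw [hF, hm]) hsd
    (by positivity) (by rw [hF, ← hn_def]; exact Nat.pow_le_pow_right two_pos hek) ?_ hQ hn ?_
  · have hexp := mul_le_of_two_pow_pow_le (by
      exact (Nat.le_add_right _ _).trans (hsize.le.trans (Nat.pow_le_pow_right two_pos hB))) hmain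
    have hsplit : w * (m - d) + (w * d + w * r) = w * n := by
      rw [← mul_add, ← mul_add, ← add_assoc, Nat.sub_add_cancel (by omega), hm]
    omega
  · have hmd : w * (m - d) * 2 ^ γ ≤ w * n * 2 ^ γ := by
      gcongr
      omega
    calc ((2 ^ w) ^ (m - d)) ^ 2 ^ γ * (2 * (2 ^ e) ^ Fintype.card F)
        = 2 ^ (w * (m - d) * 2 ^ γ + 1 + e * n) := by rw [hF]; ring
      _ ≤ 2 ^ (k * d) := Nat.pow_le_pow_right two_pos (by omega)
      _ = Fintype.card F ^ d := by rw [hF, ← hn_def, pow_mul]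
  · calc 2 * (∑ i, ∑ j, (Q i j).support.card) * 2 ^ (s + 1)
        < 2 * 2 ^ B * 2 ^ (s + 1) := by gcongr; omega
      _ = 2 ^ (B + s + 2) := by ring
      _ ≤ 2 ^ (e * (s + 1)) := Nat.pow_le_pow_right two_pos hkill
      _ = (2 ^ e) ^ (s + 1) := pow_mul ..

theorem two_pow_mul_add_one_le_two_pow {c l : ℕ} (h : 2 * c + 1 ≤ l) :
    2 ^ c * (l + 1) ≤ 2 ^ l := by
  induction l, h using Nat.le_induction with
  | base =>
    calc 2 ^ c * (2 * c + 1 + 1) = 2 ^ (c + 1) * (c + 1) := by ring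
      _ ≤ 2 ^ (c + 1) * 2 ^ c := Nat.mul_le_mul_left _ Nat.lt_two_pow_self
      _ = 2 ^ (2 * c + 1) := by ring
  | succ l _ ih =>
    rw [pow_succ]
    nlinarith [Nat.one_le_two_pow (n := c)]

theorem two_pow_mul_add_lt_two_pow_mul {τ γ s n u r : ℕ} (hd : d + u ≤ n) (hu : u * 2 ^ τ = n)
    (hr : r * 2 ^ γ = n) (hγ : 2 ^ (τ + 2) * (s + 1) ≤ 2 ^ γ) (hn : 1 < n) :
    2 ^ (τ + 3) * d + 2 ^ (τ + 3) * r + 1 + 3 * n + (2 ^ (τ + 3) + 2) * (r * s) <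
      2 ^ (τ + 3) * n := by
  have hgap : 2 ^ (τ + 3) * d + 8 * n ≤ 2 ^ (τ + 3) * n :=
    calc 2 ^ (τ + 3) * d + 8 * n = 2 ^ (τ + 3) * (d + u) := by rw [← hu]; ring
      _ ≤ 2 ^ (τ + 3) * n := Nat.mul_le_mul_left _ hd
  have hloss : 2 ^ (τ + 3) * r + (2 ^ (τ + 3) + 2) * (r * s) ≤ 4 * n :=
    calc 2 ^ (τ + 3) * r + (2 ^ (τ + 3) + 2) * (r * s)
        ≤ 2 * 2 ^ (τ + 3) * r + (2 ^ (τ + 3) + 2 ^ (τ + 3)) * (r * s) := by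
          gcongr
          · omega
          · exact Nat.le_self_pow (by omega) 2
      _ = 4 * r * (2 ^ (τ + 2) * (s + 1)) := by ring
      _ ≤ 4 * r * 2 ^ γ := Nat.mul_le_mul_left _ hγ
      _ = 4 * n := by rw [mul_assoc, hr]
  omega

theorem two_pow_le_card_add_sum_card_support_of_two_pow_le {τ γ : ℕ} (hF : Fintype.card F = 2 ^ k)
    (hγ : 2 ^ (τ + 2) * (γ + 2 * τ + 6) ≤ 2 ^ γ) (hk : 2 ^ (γ + 2 * τ + 5) ≤ k)
    (hd : 2 ^ (k - τ) ≤ d) (hd' : d + 2 ^ (k - τ) ≤ 2 ^ k)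
    (hQ : nisanWigderson F K d = ∑ i, ∏ j, Q i j)
    (hn : ∀ i, ∑ j, (Q i j).totalDegree ≤ 2 ^ k) :
    2 ^ (2 ^ (γ + τ + 2) * (γ + 2 * τ + 6)) ≤
      Fintype.card ι + ∑ i, ∑ j, (Q i j).support.card := by
  have hlam : 2 * (γ + 2 * τ + 5) ≤ 2 ^ (γ + 2 * τ + 5) :=
    (Nat.mul_le_mul_left 2 (Nat.le_succ _)).trans
      (two_pow_mul_add_one_le_two_pow (c := 1) (by omega))
  have hτk : 2 ^ (k - τ) * 2 ^ τ = 2 ^ k := pow_sub_mul_pow 2 (by omega)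
  have hγk : 2 ^ (k - γ) * 2 ^ γ = 2 ^ k := pow_sub_mul_pow 2 (by omega)
  refine two_pow_le_card_add_sum_card_support (γ := γ) (w := 2 ^ (τ + 3)) (s := γ + 2 * τ + 5)
    (e := 2 ^ (γ + τ + 3)) hF ?_ ?_ ?_ ?_ ?_ hQ hn
  · calc γ + 2 * τ + 5 + 1 ≤ 2 ^ (γ + 2 * τ + 5) := Nat.lt_two_pow_self
      _ ≤ 2 ^ (k - τ) := Nat.pow_le_pow_right two_pos (by omega)
      _ ≤ d := hd
  · have hone : 1 ≤ 2 ^ (γ + τ) * 2 ^ k := Nat.one_le_iff_ne_zero.2 (by positivity)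
    calc 2 ^ (τ + 3) * 2 ^ k * 2 ^ γ + 1 + 2 ^ (γ + τ + 3) * 2 ^ k
        = 16 * (2 ^ (γ + τ) * 2 ^ k) + 1 := by ring
      _ ≤ 32 * (2 ^ (γ + τ) * 2 ^ k) := by omega
      _ = 2 ^ (γ + 2 * τ + 5) * 2 ^ (k - τ) := by rw [← hτk]; ring
      _ ≤ k * d := Nat.mul_le_mul hk hd
  · exact two_pow_mul_add_lt_two_pow_mul hd' hτk hγk hγ (Nat.one_lt_two_pow (by omega))
  · have hle : γ + 2 * τ + 6 ≤ 2 ^ (γ + τ) * (γ + 2 * τ + 6) :=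
      Nat.le_mul_of_pos_left _ (by positivity)
    calc 2 ^ (γ + τ + 2) * (γ + 2 * τ + 6) + (γ + 2 * τ + 5) + 2
        ≤ 4 * (2 ^ (γ + τ) * (γ + 2 * τ + 6)) + 2 * (γ + 2 * τ + 6) := by
          rw [pow_add]
          linarith
      _ ≤ 8 * (2 ^ (γ + τ) * (γ + 2 * τ + 6)) := by omega
      _ = 2 ^ (γ + τ + 3) * (γ + 2 * τ + 5 + 1) := by ring
  · calc 2 ^ (γ + τ + 2) * (γ + 2 * τ + 6) ≤ 2 ^ (γ + 2 * τ + 5) * 2 ^ (γ + 2 * τ + 5) :=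
          Nat.mul_le_mul (Nat.pow_le_pow_right two_pos (by omega)) Nat.lt_two_pow_self
      _ = 2 ^ (2 * (γ + 2 * τ + 5)) := by ring
      _ ≤ 2 ^ k := Nat.pow_le_pow_right two_pos (by omega)

theorem exists_two_pow_le_and_lt_two_pow {τ : ℕ} (hk : 2 ^ (6 * τ + 15) ≤ k) :
    ∃ γ, 2 ^ (τ + 2) * (γ + 2 * τ + 6) ≤ 2 ^ γ ∧ 2 ^ (γ + 2 * τ + 5) ≤ k ∧
      k < 2 ^ (γ + 2 * τ + 6) := by
  have hk0 : k ≠ 0 := (hk.trans_lt' (by positivity)).ne'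
  have hlog_ge := Nat.le_log_of_pow_le one_lt_two hk
  obtain ⟨γ, hlog⟩ : ∃ γ, Nat.log 2 k = γ + 2 * τ + 5 := ⟨Nat.log 2 k - (2 * τ + 5), by omega⟩
  refine ⟨γ, ?_, hlog ▸ Nat.pow_log_le_self 2 hk0, ?_⟩
  · refine Nat.le_of_mul_le_mul_right (c := 2 ^ (2 * τ + 5)) ?_ (by positivity)
    calc 2 ^ (τ + 2) * (γ + 2 * τ + 6) * 2 ^ (2 * τ + 5)
        = 2 ^ (3 * τ + 7) * (γ + 2 * τ + 5 + 1) := by ring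
      _ ≤ 2 ^ (γ + 2 * τ + 5) := two_pow_mul_add_one_le_two_pow (by omega)
      _ = 2 ^ γ * 2 ^ (2 * τ + 5) := by ring
  · have := Nat.lt_pow_succ_log_self one_lt_two k
    rwa [hlog] at this

theorem exists_two_pow_sub_le_floor {δ : ℝ} (hδ0 : 0 < δ) (hδ1 : δ < 1) :
    ∃ τ : ℕ, ∀ k ≥ τ, 2 ^ (k - τ) ≤ ⌊δ * 2 ^ k⌋₊ ∧ ⌊δ * 2 ^ k⌋₊ + 2 ^ (k - τ) ≤ 2 ^ k := by
  obtain ⟨τ, hτ⟩ := exists_pow_lt_of_lt_one (lt_min hδ0 (sub_pos.2 hδ1)) one_half_lt_one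
  refine ⟨τ, fun k hk => ?_⟩
  have hpow : (2 : ℝ) ^ (k - τ) = (1 / 2) ^ τ * 2 ^ k := by
    rw [← pow_sub_mul_pow 2 hk, mul_left_comm, ← mul_pow]
    norm_num
  have hδ : (2 : ℝ) ^ (k - τ) ≤ δ * 2 ^ k := by
    rw [hpow]
    exact mul_le_mul_of_nonneg_right (hτ.le.trans (min_le_left _ _)) (by positivity)
  have hδ' : (2 : ℝ) ^ (k - τ) ≤ (1 - δ) * 2 ^ k := by
    rw [hpow]
    exact mul_le_mul_of_nonneg_right (hτ.le.trans (min_le_right _ _)) (by positivity)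
  refine ⟨Nat.le_floor (by exact_mod_cast hδ), ?_⟩
  have hfloor : (⌊δ * 2 ^ k⌋₊ : ℝ) ≤ δ * 2 ^ k := Nat.floor_le (by positivity)
  have : (⌊δ * 2 ^ k⌋₊ : ℝ) + 2 ^ (k - τ) ≤ 2 ^ k := by linarith
  exact_mod_cast this

theorem log_log_two_pow_le {k L : ℕ} (hk : k ≤ 2 ^ L) :
    Real.log (Real.log (2 ^ k)) ≤ L := by
  obtain rfl | hk0 := k.eq_zero_or_pos
  · simp
  have hlog2 : Real.log 2 ≤ 1 := by linarith [Real.log_two_lt_d9]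
  have hlog : Real.log (2 ^ k) ≤ (2 : ℝ) ^ L := by
    rw [Real.log_pow]
    have : (k : ℝ) ≤ 2 ^ L := by exact_mod_cast hk
    nlinarith
  calc Real.log (Real.log (2 ^ k)) ≤ Real.log ((2 : ℝ) ^ L) :=
        Real.log_le_log (Real.log_pos (one_lt_pow₀ one_lt_two hk0.ne')) hlog
    _ = L * Real.log 2 := Real.log_pow ..
    _ ≤ L := mul_le_of_le_one_right (by positivity) hlog2

theorem two_pow_rpow_mul_log_log_le {k a b L : ℕ} (hk : k ≤ 2 ^ L) (hL : L ≤ a + b) :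
    ((2 : ℝ) ^ k) ^ (1 / 2 ^ b * Real.log (Real.log (2 ^ k))) ≤ 2 ^ (2 ^ a * L) := by
  rw [← Real.rpow_natCast 2 k, ← Real.rpow_mul zero_le_two, ← Real.rpow_natCast 2 (_ * _),
    Real.rpow_natCast 2 k]
  refine Real.rpow_le_rpow_of_exponent_le one_le_two ?_
  have hkab : (k : ℝ) / 2 ^ b ≤ 2 ^ a := by
    rw [div_le_iff₀ (by positivity), ← pow_add]
    exact_mod_cast hk.trans (Nat.pow_le_pow_right two_pos hL)
  calc k * (1 / 2 ^ b * Real.log (Real.log (2 ^ k)))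
      = k / 2 ^ b * Real.log (Real.log (2 ^ k)) := by ring
    _ ≤ k / 2 ^ b * L := mul_le_mul_of_nonneg_left (log_log_two_pow_le hk) (by positivity)
    _ ≤ 2 ^ a * L := mul_le_mul_of_nonneg_right hkab (Nat.cast_nonneg L)
    _ = ((2 ^ a * L : ℕ) : ℝ) := by push_cast; rfl

end Parameters

theorem stmt0_general (δ : ℝ) (hδ0 : 0 < δ) (hδ1 : δ < 1) :
    ∃ c : ℝ, 0 < c ∧ ∃ n₀ : ℕ, ∀ k : ℕ, n₀ ≤ 2 ^ k →
      ∀ (F K : Type*) [Field F] [Fintype F] [Field K], Fintype.card F = 2 ^ k →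
      ∀ (T : ℕ) (dd : Fin T → ℕ) (Q : (i : Fin T) → Fin (dd i) → MvPolynomial (F × F) K),
        (∀ i, ∑ j, (Q i j).totalDegree ≤ 2 ^ k) →
        nisanWigderson F K ⌊δ * (2 ^ k : ℝ)⌋₊ = ∑ i, ∏ j, Q i j →
        ((2 : ℝ) ^ k) ^ (c * Real.log (Real.log ((2 : ℝ) ^ k))) ≤
          (T : ℝ) + ∑ i, ∑ j, ((Q i j).support.card : ℝ) := by
  obtain ⟨τ, hτ⟩ := exists_two_pow_sub_le_floor hδ0 hδ1
  refine ⟨1 / 2 ^ (τ + 4), by positivity, 2 ^ 2 ^ (6 * τ + 15),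
    fun k hk F K _ _ _ hF T dd Q hQ h => ?_⟩
  have hk_large : 2 ^ (6 * τ + 15) ≤ k := (Nat.pow_le_pow_iff_right one_lt_two).1 hk
  have hτk : τ ≤ k := (show τ ≤ 6 * τ + 15 by omega).trans (Nat.lt_two_pow_self.le.trans hk_large)
  obtain ⟨hd, hd'⟩ := hτ k hτk
  obtain ⟨γ, hγ, hγk, hkγ⟩ := exists_two_pow_le_and_lt_two_pow hk_large
  have hsize := two_pow_le_card_add_sum_card_support_of_two_pow_le hF hγ hγk hd hd' h hQ
  rw [Fintype.card_fin] at hsize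
  calc _ ≤ (2 : ℝ) ^ (2 ^ (γ + τ + 2) * (γ + 2 * τ + 6)) :=
        two_pow_rpow_mul_log_log_le hkγ.le (by omega)
    _ ≤ _ := by exact_mod_cast hsize

/-- For every constant `0 < δ < 1` there are `c > 0` and `n₀` such that
for every `n = 2 ^ k ≥ n₀`, with `d = ⌊δ n⌋`: for every homogeneous ΣΠΣΠ representation
`NW_d = Σ_{i=1}^{T} Π_{j=1}^{d_i} Q_{i,j}` (each `Q_{i,j}` homogeneous, with
`Σ_j deg Q_{i,j} = n` for each `i`), the quantity
`T + Σ_{i,j} #(monomials of Q_{i,j})` is at least `n ^ (c log log n)`. -/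
theorem stmt0 (δ : ℝ) (hδ0 : 0 < δ) (hδ1 : δ < 1) :
    ∃ c : ℝ, 0 < c ∧ ∃ n₀ : ℕ, ∀ k : ℕ, n₀ ≤ 2 ^ k →
      ∀ (F : Type) [Field F] [Fintype F], Fintype.card F = 2 ^ k →
      ∀ (T : ℕ) (dd : Fin T → ℕ)
        (Q : (i : Fin T) → Fin (dd i) → MvPolynomial (F × F) F)
        (deg : (i : Fin T) → Fin (dd i) → ℕ),
        (∀ i j, (Q i j).IsHomogeneous (deg i j)) →
        (∀ i, ∑ j, deg i j = 2 ^ k) →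
        NW F ⌊δ * (2 ^ k : ℝ)⌋₊ = ∑ i, ∏ j, Q i j →
        ((2 : ℝ) ^ k) ^ (c * Real.log (Real.log ((2 : ℝ) ^ k))) ≤
          (T : ℝ) + ∑ i, ∑ j, ((Q i j).support.card : ℝ) := by
  obtain ⟨c, hc, n₀, h⟩ := stmt0_general δ hδ0 hδ1
  exact ⟨c, hc, n₀, fun k hk F _ _ hF T dd Q deg hom hdeg => h k hk F F hF T dd Q fun i =>
    (hdeg i).le.trans' (Finset.sum_le_sum fun j _ => (hom i j).totalDegree_le)⟩
end

section
/- For every constant δ with 0 < δ < 1 there exist constants β > 0, c > 0 and an integer n₀ such that for every n = 2^k ≥ n₀ the following holds with d = ⌊δn⌋ and N = n². If NW_d = Σ_{i=1}^{T} Π_{j=1}^{d_i} Q_{i,j} is a homogeneous ΣΠΣΠ representation in which every monomial appearing in any Q_{i,j} has support at most β·log n, then T ≥ 2^{cn}. -/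
open MvPolynomial

/-
For sets `S` of `r` variables and `m` of `l` variables, take the `S`-th derivative of `P`, multiply
it by the monomial of `m`, and keep only the multilinear monomials. The dimension of the span of all
these polynomials is a subadditive measure of `P`.

If every monomial of the `Q j` has support at most `s`, a derivative of `∏ j, Q j` is a combination
of polynomials `g * ∏ j ∈ Aᶜ, Q j` with `g` of support at most `r * s`, so its multilinear shifts
are spanned by the shifts of the cofactors `∏ j ∈ Aᶜ, Q j` by sets of size between `l` and
`l + r * s`. With at most `n` non-constant factors there are few of those.

For `NW_d`, fix a set `R` of `r` rows. Differentiating along the graph over `R` of each polynomial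
of degree less than `r` gives `n ^ r` derivatives. Their leading monomials are graphs over `Rᶜ` of
distinct polynomials of degree less than `d`, hence differ in at least `n - r - d` places. A random
shift by `m` therefore rarely makes two of them collide, and the shifts that avoid collisions have
distinct leading monomials, so they are linearly independent.

Taking `n ^ r` of order `2 ^ (A * n)` makes the ratio of the two bounds exponential in `n`.
-/

namespace NW

open Finset Module

section Counting

lemma choose_mul_pow_le_choose {l N q : ℕ} (hq : 0 < q) (h : l * q ≤ N) (t : ℕ) :
    l.choose t * q ^ t ≤ N.choose t := by
  induction t with
  | zero => simp
  | succ t ih =>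
    have hsub : (l - t) * q ≤ N - t := by
      have : t ≤ t * q := Nat.le_mul_of_pos_right t hq
      rw [Nat.sub_mul]
      omega
    refine Nat.le_of_mul_le_mul_right (c := t + 1) ?_ t.succ_pos
    calc l.choose (t + 1) * q ^ (t + 1) * (t + 1)
        = l.choose (t + 1) * (t + 1) * q ^ (t + 1) := by ring
      _ = l.choose t * q ^ t * ((l - t) * q) := by rw [Nat.choose_succ_right_eq]; ring
      _ ≤ N.choose t * (N - t) := Nat.mul_le_mul ih hsub
      _ = N.choose (t + 1) * (t + 1) := (Nat.choose_succ_right_eq N t).symm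

lemma choose_sub_mul_pow_le_choose {l N q t : ℕ} (hq : 0 < q) (h : l * q ≤ N) (ht : t ≤ l) :
    (N - t).choose (l - t) * q ^ t ≤ N.choose l := by
  have hlN : l ≤ N := (Nat.le_mul_of_pos_right l hq).trans h
  refine Nat.le_of_mul_le_mul_left (c := N.choose t) ?_ (Nat.choose_pos (ht.trans hlN))
  calc N.choose t * ((N - t).choose (l - t) * q ^ t)
      = N.choose l * (l.choose t * q ^ t) := by rw [← mul_assoc, ← Nat.choose_mul ht, mul_assoc]
    _ ≤ N.choose l * N.choose t := Nat.mul_le_mul_left _ (choose_mul_pow_le_choose hq h t)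
    _ = N.choose t * N.choose l := mul_comm ..

lemma choose_add_left_le_two_pow_mul {l N : ℕ} (h : 2 * l ≤ N) (j : ℕ) :
    (N + j).choose l ≤ 2 ^ j * N.choose l := by
  induction j with
  | zero => simp
  | succ j ih =>
    have hstep : (N + j + 1).choose l ≤ 2 * (N + j).choose l := by
      refine Nat.le_of_mul_le_mul_right (c := N + j + 1 - l) ?_ (by omega)
      calc (N + j + 1).choose l * (N + j + 1 - l)
          = (N + j).choose l * (N + j + 1) := (Nat.choose_mul_succ_eq (N + j) l).symm
        _ ≤ (N + j).choose l * (2 * (N + j + 1 - l)) := Nat.mul_le_mul_left _ (by omega)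
        _ = 2 * (N + j).choose l * (N + j + 1 - l) := by ring
    calc (N + j + 1).choose l ≤ 2 * (N + j).choose l := hstep
      _ ≤ 2 * (2 ^ j * N.choose l) := Nat.mul_le_mul_left 2 ih
      _ = 2 ^ (j + 1) * N.choose l := by ring

lemma choose_add_right_le_pow_mul {l N q : ℕ} (h : N ≤ l * q) (w : ℕ) :
    N.choose (l + w) ≤ q ^ w * N.choose l := by
  induction w with
  | zero => simp
  | succ w ih =>
    have hsub : N - (l + w) ≤ q * (l + w + 1) := by
      calc N - (l + w) ≤ l * q := (Nat.sub_le _ _).trans h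
        _ ≤ q * (l + w + 1) := by rw [mul_comm]; exact Nat.mul_le_mul_left _ (by omega)
    refine Nat.le_of_mul_le_mul_right (c := l + w + 1) ?_ (l + w).succ_pos
    calc N.choose (l + w + 1) * (l + w + 1)
        = N.choose (l + w) * (N - (l + w)) := Nat.choose_succ_right_eq N (l + w)
      _ ≤ q ^ w * N.choose l * (q * (l + w + 1)) := Nat.mul_le_mul ih hsub
      _ = q ^ (w + 1) * N.choose l * (l + w + 1) := by ring

variable {V : Type*}

lemma card_filter_card_mem_Icc_le [Fintype V] {l q : ℕ} (hq : 0 < q)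
    (h : Fintype.card V ≤ l * q) (w : ℕ) :
    #{m : Finset V | #m ∈ Icc l (l + w)} ≤ (w + 1) * (q ^ w * (Fintype.card V).choose l) := by
  classical
  have hlayers : ({m : Finset V | #m ∈ Icc l (l + w)} : Finset _) ⊆
      (range (w + 1)).biUnion fun j => powersetCard (l + j) univ := by
    intro m hm
    obtain ⟨hlm, hmw⟩ := mem_Icc.1 (mem_filter.1 hm).2
    exact mem_biUnion.2 ⟨#m - l, mem_range.2 (by omega),
      mem_powersetCard.2 ⟨subset_univ m, by omega⟩⟩
  calc #{m : Finset V | #m ∈ Icc l (l + w)}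
      ≤ ∑ j ∈ range (w + 1), #(powersetCard (l + j) (univ : Finset V)) :=
        (card_le_card hlayers).trans card_biUnion_le
    _ ≤ ∑ _j ∈ range (w + 1), q ^ w * (Fintype.card V).choose l := by
        refine sum_le_sum fun j hj => ?_
        have hjw : j ≤ w := Nat.lt_succ_iff.1 (mem_range.1 hj)
        rw [card_powersetCard, card_univ]
        exact (choose_add_right_le_pow_mul h j).trans
          (Nat.mul_le_mul_right _ (Nat.pow_le_pow_right hq hjw))
    _ = (w + 1) * (q ^ w * (Fintype.card V).choose l) := by simp

variable [DecidableEq V]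

lemma card_filter_superset_mul_pow_le_choose {Y : Finset V} {l q : ℕ} (hq : 0 < q)
    (hY : l * q ≤ #Y) (E : Finset V) :
    #{m ∈ powersetCard l Y | E ⊆ m} * q ^ #E ≤ (#Y).choose l := by
  by_cases hE : E ⊆ Y ∧ #E ≤ l
  · rw [card_filter_powersetCard_subset E Y l hE.1 hE.2]
    exact choose_sub_mul_pow_le_choose hq hY hE.2
  · have hempty : {m ∈ powersetCard l Y | E ⊆ m} = ∅ := by
      refine filter_eq_empty_iff.2 fun m hm hEm => hE ?_
      obtain ⟨hmY, rfl⟩ := mem_powersetCard.1 hm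
      exact ⟨hEm.trans hmY, card_le_card hEm⟩
    simp [hempty]

/- Union bound: an `l`-subset of `Y` contains a given `t`-set with probability at most `q⁻ᵗ`. -/
theorem choose_le_two_mul_card_filter_not_superset {ι : Type*} {Y : Finset V} {l q t : ℕ}
    (hq : 0 < q) (hY : l * q ≤ #Y) {s : Finset ι} {E : ι → Finset V} (hE : ∀ i ∈ s, t ≤ #(E i))
    (hs : 2 * #s ≤ q ^ t) :
    (#Y).choose l ≤ 2 * #{m ∈ powersetCard l Y | ∀ i ∈ s, ¬ E i ⊆ m} := by
  classical
  set bad : Finset (Finset V) := s.biUnion fun i => {m ∈ powersetCard l Y | E i ⊆ m}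
  have hbad_mul : #bad * q ^ t ≤ #s * (#Y).choose l := by
    calc #bad * q ^ t ≤ ∑ i ∈ s, #{m ∈ powersetCard l Y | E i ⊆ m} * q ^ t := by
          rw [← sum_mul]; exact Nat.mul_le_mul_right _ card_biUnion_le
      _ ≤ ∑ _i ∈ s, (#Y).choose l := sum_le_sum fun i hi =>
          (Nat.mul_le_mul_left _ (Nat.pow_le_pow_right hq (hE i hi))).trans
            (card_filter_superset_mul_pow_le_choose hq hY (E i))
      _ = #s * (#Y).choose l := by rw [sum_const, smul_eq_mul]
  have hbad : 2 * #bad ≤ (#Y).choose l := by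
    refine Nat.le_of_mul_le_mul_right (c := q ^ t) ?_ (by positivity)
    calc 2 * #bad * q ^ t ≤ 2 * #s * (#Y).choose l := by rw [mul_assoc, mul_assoc]; gcongr
      _ ≤ (#Y).choose l * q ^ t := by rw [mul_comm]; gcongr
  have hcover : powersetCard l Y ⊆ {m ∈ powersetCard l Y | ∀ i ∈ s, ¬ E i ⊆ m} ∪ bad := by
    intro m hm
    by_cases h : ∀ i ∈ s, ¬ E i ⊆ m
    · exact mem_union_left _ (mem_filter.2 ⟨hm, h⟩)
    · push Not at h
      obtain ⟨i, hi, him⟩ := h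
      exact mem_union_right _ (mem_biUnion.2 ⟨i, hi, mem_filter.2 ⟨hm, him⟩⟩)
  have hcard := (card_le_card hcover).trans (card_union_le _ _)
  rw [card_powersetCard] at hcard
  omega

end Counting

section MultilinearMonomials

variable {V R : Type*}

/-- The exponent vector of the multilinear monomial `∏ v ∈ S, X v`. -/
noncomputable def setExponent (S : Finset V) : V →₀ ℕ :=
  ∑ v ∈ S, Finsupp.single v 1

lemma setExponent_apply [DecidableEq V] (S : Finset V) (v : V) :
    setExponent S v = if v ∈ S then 1 else 0 := by
  simp [setExponent, Finsupp.finsetSum_apply, Finsupp.single_apply]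

@[simp]
lemma support_setExponent (S : Finset V) : (setExponent S).support = S := by
  classical
  ext v
  simp [setExponent_apply]

lemma setExponent_injective : Function.Injective (setExponent : Finset V → V →₀ ℕ) :=
  Function.LeftInverse.injective support_setExponent

lemma setExponent_union [DecidableEq V] {S T : Finset V} (h : Disjoint S T) :
    setExponent (S ∪ T) = setExponent S + setExponent T :=
  sum_union h

lemma exists_two_le_of_ne_setExponent {e : V →₀ ℕ} (he : e ≠ setExponent e.support) :
    ∃ v, 2 ≤ e v := by
  classical
  obtain ⟨v, hv⟩ := DFunLike.ne_iff.1 he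
  refine ⟨v, ?_⟩
  rw [setExponent_apply] at hv
  split_ifs at hv with hmem
  · have := Finsupp.mem_support_iff.1 hmem
    omega
  · exact absurd (Finsupp.notMem_support_iff.1 hmem) hv

section CommSemiring

variable [CommSemiring R]

lemma monomial_setExponent (S : Finset V) :
    monomial (setExponent S) (1 : R) = ∏ v ∈ S, X v :=
  monomial_sum_one S _

lemma pderiv_monomial_setExponent [DecidableEq V] (v : V) (S : Finset V) :
    pderiv v (monomial (setExponent S) (1 : R)) =
      if v ∈ S then monomial (setExponent (S.erase v)) 1 else 0 := by
  rw [pderiv_monomial, setExponent_apply]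
  split_ifs with hv
  · have herase : setExponent S - Finsupp.single v 1 = setExponent (S.erase v) := by
      rw [setExponent, setExponent, ← sum_erase_add _ _ hv, add_tsub_cancel_right]
    rw [herase, Nat.cast_one, mul_one]
  · simp

/-- The coefficients of a polynomial at its multilinear monomials, indexed by sets of variables.
This plays the role of the projection of `p` onto its multilinear part. -/
noncomputable def multilinearCoeffs : MvPolynomial V R →ₗ[R] (Finset V → R) :=
  LinearMap.pi fun S => lcoeff R (setExponent S)

lemma multilinearCoeffs_apply (p : MvPolynomial V R) (S : Finset V) :
    multilinearCoeffs p S = coeff (setExponent S) p := rfl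

lemma multilinearCoeffs_monomial_mul_eq_zero {e : V →₀ ℕ} (he : e ≠ setExponent e.support)
    (a : R) (p : MvPolynomial V R) : multilinearCoeffs (monomial e a * p) = 0 := by
  classical
  obtain ⟨v, hv⟩ := exists_two_le_of_ne_setExponent he
  ext S
  have hnle : ¬ e ≤ setExponent S := fun hle => by
    have := hv.trans (hle v)
    rw [setExponent_apply] at this
    split_ifs at this <;> omega
  rw [multilinearCoeffs_apply, coeff_monomial_mul', if_neg hnle, Pi.zero_apply]

end CommSemiring

end MultilinearMonomials

section Derivatives

variable {V R : Type*} [CommRing R]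

lemma commute_pderiv (v w : V) :
    Commute (pderiv v : Derivation R (MvPolynomial V R) (MvPolynomial V R)).toLinearMap
      (pderiv w : Derivation R (MvPolynomial V R) (MvPolynomial V R)).toLinearMap := by
  classical
  have hbracket : ⁅pderiv v, (pderiv w : Derivation R (MvPolynomial V R) (MvPolynomial V R))⁆ = 0 :=
    derivation_ext fun u => by
      rw [Derivation.commutator_apply, pderiv_X, pderiv_X, Pi.single_apply, Pi.single_apply]
      split_ifs <;> simp
  refine LinearMap.ext fun p => sub_eq_zero.1 ?_
  rw [Module.End.mul_apply, Module.End.mul_apply]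
  exact (Derivation.commutator_apply p).symm.trans (DFunLike.congr_fun hbracket p)

/-- The iterated partial derivative `∏ v ∈ S, ∂/∂v`. -/
noncomputable def iteratedPDeriv (S : Finset V) : Module.End R (MvPolynomial V R) :=
  S.noncommProd (fun v => (pderiv v).toLinearMap)
    (Set.pairwise_of_forall _ _ commute_pderiv)

lemma iteratedPDeriv_empty (p : MvPolynomial V R) : iteratedPDeriv ∅ p = p := by
  rw [iteratedPDeriv, noncommProd_empty, Module.End.one_apply]

lemma iteratedPDeriv_insert [DecidableEq V] {v : V} {S : Finset V} (hv : v ∉ S)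
    (p : MvPolynomial V R) :
    iteratedPDeriv (insert v S) p = pderiv v (iteratedPDeriv S p) := by
  rw [iteratedPDeriv, noncommProd_insert_of_notMem _ _ _ _ hv]
  rfl

lemma iteratedPDeriv_monomial_setExponent [DecidableEq V] (S T : Finset V) :
    iteratedPDeriv S (monomial (setExponent T) (1 : R)) =
      if S ⊆ T then monomial (setExponent (T \ S)) 1 else 0 := by
  induction S using Finset.induction_on with
  | empty => simp [iteratedPDeriv_empty]
  | insert v S hv ih =>
    rw [iteratedPDeriv_insert hv, ih, apply_ite (pderiv v), pderiv_monomial_setExponent, map_zero,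
      ← ite_and]
    refine if_congr ?_ (by rw [← sdiff_insert]) rfl
    simp [insert_subset_iff, hv, and_comm]

lemma pderiv_prod {κ : Type*} [DecidableEq κ] (v : V) (Q : κ → MvPolynomial V R) (s : Finset κ) :
    pderiv v (∏ j ∈ s, Q j) = ∑ j ∈ s, pderiv v (Q j) * ∏ i ∈ s.erase j, Q i := by
  induction s using Finset.induction_on with
  | empty => simp
  | insert a s ha ih =>
    rw [prod_insert ha, pderiv_mul, ih, sum_insert ha, erase_insert ha, mul_sum]
    congr 1
    refine sum_congr rfl fun j hj => ?_
    have haj : a ≠ j := fun h => ha (h ▸ hj)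
    rw [erase_insert_of_ne haj, prod_insert (by simp [ha]), mul_left_comm]

end Derivatives

section Products

variable {V R κ : Type*} [CommRing R] {s w : ℕ}

/-- The space of polynomials all of whose monomials have support at most `w`. -/
noncomputable def lowSupport (V R : Type*) [CommSemiring R] (w : ℕ) :
    Submodule R (MvPolynomial V R) :=
  restrictSupport R {e | #e.support ≤ w}

lemma lowSupport_mono {w' : ℕ} (h : w ≤ w') : lowSupport V R w ≤ lowSupport V R w' :=
  restrictSupport_mono R fun _ he => le_trans he h

lemma lowSupport_le_iff {w : ℕ} {M : Submodule R (MvPolynomial V R)} :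
    lowSupport V R w ≤ M ↔ ∀ e : V →₀ ℕ, #e.support ≤ w → monomial e 1 ∈ M := by
  rw [lowSupport, restrictSupport_eq_span, Submodule.span_le, Set.image_subset_iff]
  rfl

lemma one_mem_lowSupport (w : ℕ) : 1 ∈ lowSupport V R w :=
  (monomial_mem_restrictSupport R).2 <| .inl <| by simp

lemma mul_mem_lowSupport {w' : ℕ} {p q : MvPolynomial V R} (hp : p ∈ lowSupport V R w)
    (hq : q ∈ lowSupport V R w') : p * q ∈ lowSupport V R (w + w') := by
  classical
  have hmul := Submodule.mul_mem_mul hp hq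
  rw [lowSupport, lowSupport, ← restrictSupport_add] at hmul
  refine restrictSupport_mono R ?_ hmul
  rintro _ ⟨e, he, f, hf, rfl⟩
  exact (card_le_card Finsupp.support_add).trans
    ((card_union_le _ _).trans (Nat.add_le_add he hf))

lemma pderiv_mem_lowSupport (v : V) {p : MvPolynomial V R} (hp : p ∈ lowSupport V R w) :
    pderiv v p ∈ lowSupport V R w := by
  suffices h : lowSupport V R w ≤ (lowSupport V R w).comap (pderiv v).toLinearMap from h hp
  refine lowSupport_le_iff.2 fun e he => ?_
  rw [Submodule.mem_comap, Derivation.coeFn_coe, pderiv_monomial]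
  exact (monomial_mem_restrictSupport R).2 <| .inl <|
    (card_le_card Finsupp.support_tsub).trans he

variable [Fintype κ] [DecidableEq κ] {Q : κ → MvPolynomial V R}

/-- The span of the polynomials `g * ∏ j ∈ Aᶜ, Q j` with `g` of support at most `w` and `A` a set
of non-constant factors. It contains the derivatives of `∏ j, Q j` when the `Q j`
have low support. -/
noncomputable def cofactorSpan (Q : κ → MvPolynomial V R) (w : ℕ) :
    Submodule R (MvPolynomial V R) :=
  Submodule.span R {p | ∃ A : Finset κ, (∀ j ∈ A, (Q j).totalDegree ≠ 0) ∧
    ∃ g ∈ lowSupport V R w, g * ∏ j ∈ Aᶜ, Q j = p}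

lemma mul_prod_mem_cofactorSpan {A : Finset κ} (hA : ∀ j ∈ A, (Q j).totalDegree ≠ 0)
    {g : MvPolynomial V R} (hg : g ∈ lowSupport V R w) :
    g * ∏ j ∈ Aᶜ, Q j ∈ cofactorSpan Q w :=
  Submodule.subset_span ⟨A, hA, g, hg, rfl⟩

lemma pderiv_mul_prod_mem_cofactorSpan (hQ : ∀ j, Q j ∈ lowSupport V R s) {A : Finset κ}
    (hA : ∀ j ∈ A, (Q j).totalDegree ≠ 0) {g : MvPolynomial V R} (hg : g ∈ lowSupport V R w)
    (v : V) : pderiv v (g * ∏ j ∈ Aᶜ, Q j) ∈ cofactorSpan Q (w + s) := by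
  rw [pderiv_mul, pderiv_prod, mul_sum]
  refine add_mem ?_ (sum_mem fun j _ => ?_)
  · exact mul_prod_mem_cofactorSpan hA
      (lowSupport_mono (Nat.le_add_right w s) (pderiv_mem_lowSupport v hg))
  · rw [← mul_assoc, ← compl_insert]
    by_cases hj : (Q j).totalDegree = 0
    · rw [totalDegree_eq_zero_iff_eq_C.1 hj, pderiv_C, mul_zero, zero_mul]
      exact zero_mem _
    · exact mul_prod_mem_cofactorSpan (forall_mem_insert .. |>.2 ⟨hj, hA⟩)
        (mul_mem_lowSupport hg (pderiv_mem_lowSupport v (hQ j)))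

lemma pderiv_mem_cofactorSpan (hQ : ∀ j, Q j ∈ lowSupport V R s) {p : MvPolynomial V R}
    (hp : p ∈ cofactorSpan Q w) (v : V) : pderiv v p ∈ cofactorSpan Q (w + s) := by
  suffices h : cofactorSpan Q w ≤ (cofactorSpan Q (w + s)).comap (pderiv v).toLinearMap from h hp
  refine Submodule.span_le.2 ?_
  rintro _ ⟨A, hA, g, hg, rfl⟩
  exact pderiv_mul_prod_mem_cofactorSpan hQ hA hg v

theorem iteratedPDeriv_prod_mem_cofactorSpan (hQ : ∀ j, Q j ∈ lowSupport V R s) (S : Finset V) :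
    iteratedPDeriv S (∏ j, Q j) ∈ cofactorSpan Q (#S * s) := by
  classical
  induction S using Finset.induction_on with
  | empty =>
    rw [iteratedPDeriv_empty, ← one_mul (∏ j, Q j), ← compl_empty]
    exact mul_prod_mem_cofactorSpan (by simp) (one_mem_lowSupport _)
  | insert v S hv ih =>
    rw [iteratedPDeriv_insert hv, card_insert_of_notMem hv, Nat.succ_mul]
    exact pderiv_mem_cofactorSpan hQ ih v

end Products

section ProjectedShiftedPartials

variable {V R κ : Type*}

/-- The coefficients of `(∏ v ∈ m, X v) * p` at its multilinear monomials. -/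
noncomputable def multilinearShift [CommSemiring R] (m : Finset V) :
    MvPolynomial V R →ₗ[R] (Finset V → R) :=
  multilinearCoeffs ∘ₗ LinearMap.mulLeft R (monomial (setExponent m) 1)

lemma multilinearShift_apply [CommSemiring R] (m : Finset V) (p : MvPolynomial V R)
    (S : Finset V) :
    multilinearShift m p S = coeff (setExponent S) (monomial (setExponent m) 1 * p) := rfl

section CommRing

variable [CommRing R]

/-- The span of the multilinear shifts by sets of size `l` of the polynomials in `𝓟`. -/
noncomputable def projectedShifts (l : ℕ) (𝓟 : Set (MvPolynomial V R)) :
    Submodule R (Finset V → R) :=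
  Submodule.span R <| Set.image2 (fun m p => multilinearShift m p) {m | #m = l} 𝓟

/-- The space of projected shifted partial derivatives of `P` of order `r` and shift `l`. Its
dimension is the complexity measure behind the lower bound. -/
noncomputable def projectedShiftedPartials (r l : ℕ) (P : MvPolynomial V R) :
    Submodule R (Finset V → R) :=
  projectedShifts l {p | ∃ S : Finset V, #S = r ∧ iteratedPDeriv S P = p}

lemma multilinearShift_mem_projectedShifts {m : Finset V} {p : MvPolynomial V R}
    {𝓟 : Set (MvPolynomial V R)} (hp : p ∈ 𝓟) :
    multilinearShift m p ∈ projectedShifts #m 𝓟 :=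
  Submodule.subset_span <| Set.mem_image2_of_mem rfl hp

lemma projectedShifts_mono {l : ℕ} {𝓟 𝓟' : Set (MvPolynomial V R)} (h : 𝓟 ⊆ 𝓟') :
    projectedShifts l 𝓟 ≤ projectedShifts l 𝓟' :=
  Submodule.span_mono <| Set.image2_subset_left h

lemma projectedShiftedPartials_zero (r l : ℕ) :
    projectedShiftedPartials r l (0 : MvPolynomial V R) = ⊥ := by
  refine Submodule.span_eq_bot.2 ?_
  rintro _ ⟨m, -, _, ⟨S, -, rfl⟩, rfl⟩
  simp only [map_zero]

lemma projectedShiftedPartials_add_le (r l : ℕ) (P P' : MvPolynomial V R) :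
    projectedShiftedPartials r l (P + P') ≤
      projectedShiftedPartials r l P ⊔ projectedShiftedPartials r l P' := by
  refine Submodule.span_le.2 ?_
  rintro _ ⟨m, rfl, _, ⟨S, hS, rfl⟩, rfl⟩
  simp only [map_add]
  exact Submodule.add_mem_sup (multilinearShift_mem_projectedShifts ⟨S, hS, rfl⟩)
    (multilinearShift_mem_projectedShifts ⟨S, hS, rfl⟩)

lemma multilinearShift_monomial_mul_mem_span (m : Finset V) {e : V →₀ ℕ} {w : ℕ}
    (he : #e.support ≤ w) (p : MvPolynomial V R) :
    multilinearShift m (monomial e 1 * p) ∈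
      Submodule.span R ((fun m' => multilinearShift m' p) '' {m' | #m' ∈ Icc #m (#m + w)}) := by
  classical
  have hmul : multilinearShift m (monomial e 1 * p) =
      multilinearCoeffs (monomial (setExponent m + e) 1 * p) := by
    rw [multilinearShift, LinearMap.comp_apply, LinearMap.mulLeft_apply, ← mul_assoc,
      monomial_mul, one_mul]
  rw [hmul]
  by_cases hset : setExponent m + e = setExponent (setExponent m + e).support
  · have hsupport : (setExponent m + e).support = m ∪ e.support := by
      rw [Finsupp.support_add_eq_union, support_setExponent]
    rw [hset, hsupport]
    exact Submodule.subset_span ⟨_, mem_Icc.2 ⟨card_le_card subset_union_left,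
      (card_union_le _ _).trans (Nat.add_le_add_left he _)⟩, rfl⟩
  · rw [multilinearCoeffs_monomial_mul_eq_zero hset]
    exact zero_mem _

variable [Fintype V] [Fintype κ] [DecidableEq κ]

open Classical in
/-- A finite spanning set for the projected shifts of size `l` of `cofactorSpan Q w`. -/
noncomputable def cofactorShifts (Q : κ → MvPolynomial V R) (w l : ℕ) : Finset (Finset V → R) :=
  (({j | (Q j).totalDegree ≠ 0} : Finset κ).powerset ×ˢ
    ({m | #m ∈ Icc l (l + w)} : Finset (Finset V))).image fun x =>
      multilinearShift x.2 (∏ j ∈ x.1ᶜ, Q j)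

lemma card_cofactorShifts_le (Q : κ → MvPolynomial V R) (w l : ℕ) :
    #(cofactorShifts Q w l) ≤
      2 ^ #{j | (Q j).totalDegree ≠ 0} * #{m : Finset V | #m ∈ Icc l (l + w)} := by
  classical
  rw [← card_powerset, ← card_product]
  exact card_image_le

lemma projectedShifts_cofactorSpan_le (Q : κ → MvPolynomial V R) (w l : ℕ) :
    projectedShifts l (cofactorSpan Q w : Set (MvPolynomial V R)) ≤
      Submodule.span R (cofactorShifts Q w l : Set (Finset V → R)) := by
  classical
  refine Submodule.span_le.2 ?_
  rintro _ ⟨m, rfl, p, hp, rfl⟩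
  suffices h : cofactorSpan Q w ≤ (Submodule.span R _).comap (multilinearShift m) from h hp
  refine Submodule.span_le.2 ?_
  rintro _ ⟨A, hA, g, hg, rfl⟩
  suffices h : lowSupport V R w ≤ (Submodule.span R _).comap
    (multilinearShift m ∘ₗ LinearMap.mulRight R (∏ j ∈ Aᶜ, Q j)) from h hg
  refine lowSupport_le_iff.2 fun e he => ?_
  refine Submodule.span_mono ?_ (multilinearShift_monomial_mul_mem_span m he _)
  rintro _ ⟨m', hm', rfl⟩
  have hA' : A ⊆ ({j | (Q j).totalDegree ≠ 0} : Finset κ) := fun j hj => by simp [hA j hj]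
  exact mem_image.2 ⟨(A, m'), by simpa [hA'] using hm', rfl⟩

lemma projectedShiftedPartials_prod_le {Q : κ → MvPolynomial V R} {s : ℕ}
    (hQ : ∀ j, Q j ∈ lowSupport V R s) (r l : ℕ) :
    projectedShiftedPartials r l (∏ j, Q j) ≤
      Submodule.span R (cofactorShifts Q (r * s) l : Set (Finset V → R)) := by
  refine (projectedShifts_mono ?_).trans (projectedShifts_cofactorSpan_le Q (r * s) l)
  rintro _ ⟨S, rfl, rfl⟩
  exact iteratedPDeriv_prod_mem_cofactorSpan hQ S

end CommRing

variable {K ι : Type*} [Field K]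

theorem finrank_projectedShiftedPartials_prod_le [Fintype V] [Fintype κ]
    {Q : κ → MvPolynomial V K} {s : ℕ} (hQ : ∀ j, Q j ∈ lowSupport V K s) (r l : ℕ) :
    finrank K (projectedShiftedPartials r l (∏ j, Q j)) ≤
      2 ^ #{j | (Q j).totalDegree ≠ 0} * #{m : Finset V | #m ∈ Icc l (l + r * s)} := by
  classical
  calc finrank K (projectedShiftedPartials r l (∏ j, Q j))
      ≤ (cofactorShifts Q (r * s) l : Set (Finset V → K)).finrank K :=
        Submodule.finrank_mono (projectedShiftedPartials_prod_le hQ r l)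
    _ ≤ #(cofactorShifts Q (r * s) l) := finrank_span_finset_le_card _
    _ ≤ _ := card_cofactorShifts_le Q (r * s) l

theorem finrank_projectedShiftedPartials_sum_le [Finite V] (r l : ℕ) (s : Finset ι)
    (P : ι → MvPolynomial V K) :
    finrank K (projectedShiftedPartials r l (∑ i ∈ s, P i)) ≤
      ∑ i ∈ s, finrank K (projectedShiftedPartials r l (P i)) := by
  refine Finset.le_sum_of_subadditive (fun P => finrank K (projectedShiftedPartials r l P))
    ?_ (fun P P' => ?_) s P
  · rw [projectedShiftedPartials_zero, finrank_bot]
  · exact (Submodule.finrank_mono (projectedShiftedPartials_add_le r l P P')).trans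
      (Submodule.finrank_add_le_finrank_add_finrank _ _)

end ProjectedShiftedPartials

section LinearIndependence

lemma linearIndependent_of_triangular {R ι α β : Type*} [Ring R] [NoZeroDivisors R]
    [LinearOrder β] {w : ι → β} (hw : Function.Injective w) {x : ι → α → R} {u : ι → α}
    (hdiag : ∀ i, x i (u i) ≠ 0) (hzero : ∀ i j, w i < w j → x i (u j) = 0) :
    LinearIndependent R x := by
  classical
  rw [linearIndependent_iff']
  by_contra! h
  obtain ⟨s, g, hg, i₀, hi₀, hgi₀⟩ := h
  obtain ⟨i, hi, hmax⟩ := exists_max_image {i ∈ s | g i ≠ 0} w ⟨i₀, mem_filter.2 ⟨hi₀, hgi₀⟩⟩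
  obtain ⟨his, hgi⟩ := mem_filter.1 hi
  have hother : ∀ j ∈ s, j ≠ i → g j * x j (u i) = 0 := fun j hj hji => by
    by_cases hgj : g j = 0
    · rw [hgj, zero_mul]
    · rw [hzero j i ((hmax j (mem_filter.2 ⟨hj, hgj⟩)).lt_of_ne (hw.ne hji)), mul_zero]
  have hsum : g i * x i (u i) = 0 := by
    rw [← sum_eq_single_of_mem i his hother]
    simpa using congrFun hg (u i)
  exact (mul_ne_zero hgi (hdiag i)) hsum

lemma nonempty_monomialOrder.{u} (V : Type u) [Finite V] : Nonempty (MonomialOrder.{u, u} V) := by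
  obtain ⟨n, ⟨e⟩⟩ := Finite.exists_equiv_fin V
  let _ : LinearOrder V := LinearOrder.lift' e e.injective
  exact ⟨MonomialOrder.lex⟩

variable {V R ι : Type*}

lemma multilinearShift_apply_union [DecidableEq V] [CommSemiring R] (mo : MonomialOrder V)
    {p : MvPolynomial V R} {L m : Finset V} (hL : mo.degree p = setExponent L)
    (hm : Disjoint m L) :
    multilinearShift m p (m ∪ L) = mo.leadingCoeff p := by
  rw [multilinearShift_apply, setExponent_union hm, coeff_monomial_mul, one_mul, ← hL]
  rfl

lemma multilinearShift_apply_eq_zero_of_lt [DecidableEq V] [CommSemiring R]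
    (mo : MonomialOrder V) {p : MvPolynomial V R} {L m U : Finset V}
    (hL : mo.degree p = setExponent L) (hm : Disjoint m L)
    (hU : mo.toSyn (setExponent (m ∪ L)) < mo.toSyn (setExponent U)) :
    multilinearShift m p U = 0 := by
  rw [multilinearShift_apply]
  refine mo.coeff_eq_zero_of_lt (lt_of_le_of_lt (mo.degree_mul_le.trans ?_) hU)
  rw [setExponent_union hm, hL, map_add, map_add]
  exact add_le_add_left (mo.degree_monomial_le 1) _

variable [DecidableEq V]

/-- The shifts `m` of size `l`, disjoint from `L a`, for which `m ∪ L a` determines `a`. If the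
polynomials `p a` have leading monomials `∏ v ∈ L a, X v`, then the leading monomial of the shift of
`p a` by such an `m` determines both `a` and `m`. -/
def separatingShifts [Fintype V] [Fintype ι] [DecidableEq ι] (L : ι → Finset V) (l : ℕ) (a : ι) :
    Finset (Finset V) :=
  {m ∈ powersetCard l (L a)ᶜ | ∀ b ∈ univ.erase a, ¬ L b \ L a ⊆ m}

variable [Fintype V] [Fintype ι] {L : ι → Finset V} {l : ℕ}

section SeparatingShifts

variable [DecidableEq ι]

lemma mem_separatingShifts {a : ι} {m : Finset V} :
    m ∈ separatingShifts L l a ↔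
      #m = l ∧ Disjoint m (L a) ∧ ∀ b, L b ⊆ m ∪ L a → b = a := by
  have hsdiff (b : ι) : L b \ L a ⊆ m ↔ L b ⊆ m ∪ L a := by
    rw [union_comm]
    exact sdiff_le_iff
  simp only [separatingShifts, mem_filter, mem_powersetCard, subset_compl_iff_disjoint_right,
    mem_erase, mem_univ, and_true, hsdiff, and_assoc, and_left_comm (a := Disjoint m _), ne_eq,
    not_imp_not]

lemma union_injective_separatingShifts :
    Function.Injective fun x : Σ a, separatingShifts L l a => (x.2 : Finset V) ∪ L x.1 := by
  rintro ⟨a, m, hm⟩ ⟨b, m', hm'⟩ (hmm' : m ∪ L a = m' ∪ L b)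
  obtain ⟨-, hma, ha⟩ := mem_separatingShifts.1 hm
  obtain ⟨-, hmb, -⟩ := mem_separatingShifts.1 hm'
  obtain rfl : b = a := ha b (hmm' ▸ subset_union_right)
  obtain rfl : m = m' := by
    rw [← union_sdiff_cancel_right hma, hmm', union_sdiff_cancel_right hmb]
  rfl

theorem linearIndependent_multilinearShift [CommRing R] [NoZeroDivisors R] (mo : MonomialOrder V)
    {p : ι → MvPolynomial V R} (hp : ∀ a, p a ≠ 0) (hL : ∀ a, mo.degree (p a) = setExponent (L a)) :
    LinearIndependent R fun x : Σ a, separatingShifts L l a =>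
      multilinearShift (x.2 : Finset V) (p x.1) := by
  have hdisj (x : Σ a, separatingShifts L l a) : Disjoint (x.2 : Finset V) (L x.1) :=
    (mem_separatingShifts.1 x.2.2).2.1
  refine linearIndependent_of_triangular (u := fun x => x.2 ∪ L x.1)
    (w := fun x => mo.toSyn (setExponent (x.2 ∪ L x.1))) ?_ (fun x => ?_) (fun x y hxy => ?_)
  · exact mo.toSyn.injective.comp (setExponent_injective.comp union_injective_separatingShifts)
  · rw [multilinearShift_apply_union mo (hL x.1) (hdisj x)]
    exact mo.leadingCoeff_ne_zero_iff.2 (hp x.1)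
  · exact multilinearShift_apply_eq_zero_of_lt mo (hL x.1) (hdisj x) hxy

lemma choose_le_two_mul_card_separatingShifts {n t q : ℕ} (hq : 0 < q)
    (hl : l * q ≤ Fintype.card V - n) (hι : 2 * Fintype.card ι ≤ q ^ t) (a : ι) (hn : #(L a) = n)
    (ht : ∀ b, b ≠ a → t ≤ #(L b \ L a)) :
    (Fintype.card V - n).choose l ≤ 2 * #(separatingShifts L l a) := by
  have hY : #(L a)ᶜ = Fintype.card V - n := by rw [card_compl, hn]
  have hcard : 2 * #(univ.erase a) ≤ q ^ t := (Nat.mul_le_mul_left 2 (card_le_univ _)).trans hι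
  rw [separatingShifts, ← hY]
  convert choose_le_two_mul_card_filter_not_superset hq (by rwa [hY])
    (fun b hb => ht b (ne_of_mem_erase hb)) hcard

end SeparatingShifts

theorem card_mul_choose_le_two_mul_finrank_projectedShifts [Field R] (mo : MonomialOrder V)
    {p : ι → MvPolynomial V R} (hp : ∀ a, p a ≠ 0) (hL : ∀ a, mo.degree (p a) = setExponent (L a))
    {n t q : ℕ} (hn : ∀ a, #(L a) = n) (ht : ∀ a b, b ≠ a → t ≤ #(L b \ L a)) (hq : 0 < q)
    (hl : l * q ≤ Fintype.card V - n) (hι : 2 * Fintype.card ι ≤ q ^ t) :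
    Fintype.card ι * (Fintype.card V - n).choose l ≤
      2 * finrank R (projectedShifts l (Set.range p)) := by
  classical
  have hspan : Submodule.span R (Set.range fun x : Σ a, separatingShifts L l a =>
      multilinearShift (x.2 : Finset V) (p x.1)) ≤ projectedShifts l (Set.range p) := by
    refine Submodule.span_le.2 ?_
    rintro _ ⟨⟨a, m, hm⟩, rfl⟩
    obtain ⟨rfl, -⟩ := mem_separatingShifts.1 hm
    exact multilinearShift_mem_projectedShifts ⟨a, rfl⟩
  calc Fintype.card ι * (Fintype.card V - n).choose l
      ≤ ∑ a, 2 * #(separatingShifts L l a) := by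
        rw [← card_univ, ← smul_eq_mul]
        exact card_nsmul_le_sum _ _ _ fun a _ =>
          choose_le_two_mul_card_separatingShifts hq hl hι a (hn a) (ht a)
    _ = 2 * Fintype.card (Σ a, separatingShifts L l a) := by
        simp only [Fintype.card_sigma, Fintype.card_coe, mul_sum]
    _ ≤ 2 * finrank R (projectedShifts l (Set.range p)) := by
        rw [← finrank_span_eq_card (linearIndependent_multilinearShift mo hp hL)]
        exact Nat.mul_le_mul_left 2 (Submodule.finrank_mono hspan)

end LinearIndependence

section NisanWigderson

section Graph

variable {α β : Type*} {s t : Finset α} {f g : α → β}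

/-- The graph of `f` over `s`, as a finite set of pairs. For `α = β = F` it is a set of variables
`x_{i,j}`, and the monomials of `NW F d` are the graphs of polynomials over the whole of `F`. -/
def graphOn (s : Finset α) (f : α → β) : Finset (α × β) :=
  s.map ⟨fun i => (i, f i), fun _ _ h => congrArg Prod.fst h⟩

lemma mem_graphOn {v : α × β} : v ∈ graphOn s f ↔ v.1 ∈ s ∧ f v.1 = v.2 := by
  simp only [graphOn, mem_map]
  exact ⟨by rintro ⟨i, hi, rfl⟩; exact ⟨hi, rfl⟩, fun ⟨h₁, h₂⟩ => ⟨v.1, h₁, Prod.ext rfl h₂⟩⟩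

lemma card_graphOn (s : Finset α) (f : α → β) : #(graphOn s f) = #s :=
  card_map _

lemma graphOn_subset_graphOn (hst : s ⊆ t) : graphOn s g ⊆ graphOn t f ↔ ∀ i ∈ s, f i = g i := by
  simp only [subset_iff, mem_graphOn, Prod.forall]
  exact ⟨fun h i hi => (h i (g i) ⟨hi, rfl⟩).2, fun h i _ ⟨hi, hig⟩ => ⟨hst hi, (h i hi).trans hig⟩⟩

lemma graphOn_sdiff_graphOn [DecidableEq α] [DecidableEq β] (h : ∀ i ∈ s, f i = g i) :
    graphOn t f \ graphOn s g = graphOn (t \ s) f := by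
  ext v
  simp only [mem_sdiff, mem_graphOn]
  grind

end Graph

lemma support_sum_monomial_one {R V ι : Type*} [CommSemiring R] [Nontrivial R]
    {e : ι → V →₀ ℕ} (he : Function.Injective e) (s : Finset ι) :
    (∑ c ∈ s, monomial (e c) (1 : R)).support = s.map ⟨e, he⟩ := by
  classical
  ext x
  simp only [MvPolynomial.mem_support_iff, coeff_sum, coeff_monomial, mem_map,
    Function.Embedding.coeFn_mk]
  by_cases hx : ∃ c ∈ s, e c = x
  · obtain ⟨c, hc, rfl⟩ := hx
    simp [he.eq_iff, hc]
  · refine iff_of_false (not_not.2 <| sum_eq_zero fun c hc => if_neg fun h => hx ⟨c, hc, h⟩) hx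

variable {F : Type*} [Field F] {d r : ℕ}

/-- The value at `i` of the univariate polynomial with coefficient vector `c`. -/
def evalCoeffs (c : Fin d → F) (i : F) : F :=
  ∑ j : Fin d, c j * i ^ (j : ℕ)

lemma eq_of_evalCoeffs_eq {c c' : Fin d → F} {s : Finset F} (hs : d ≤ #s)
    (h : ∀ i ∈ s, evalCoeffs c i = evalCoeffs c' i) : c = c' := by
  obtain ⟨e⟩ : Nonempty (Fin d ↪ s) := Function.Embedding.nonempty_of_card_le (by simpa using hs)
  refine sub_eq_zero.1 <| Matrix.eq_zero_of_forall_index_sum_mul_pow_eq_zero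
    (f := fun k => (e k : F)) (Subtype.val_injective.comp e.injective) fun k => ?_
  simp only [Pi.sub_apply, sub_mul, sum_sub_distrib]
  exact sub_eq_zero.2 (h (e k) (e k).2)

lemma exists_evalCoeffs_eq (h : r ≤ d) (a : Fin r → F) :
    ∃ c : Fin d → F, evalCoeffs c = evalCoeffs a := by
  obtain ⟨k, rfl⟩ := Nat.exists_eq_add_of_le h
  exact ⟨Fin.append a fun _ => 0, funext fun i => by simp [evalCoeffs, Fin.sum_univ_add]⟩

lemma NW_eq_sum_monomial [Fintype F] (d : ℕ) :
    NW F d = ∑ c : Fin d → F, monomial (setExponent (graphOn univ (evalCoeffs c))) 1 := by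
  simp only [monomial_setExponent, graphOn, prod_map]
  rfl

section DecidableEq

variable [DecidableEq F]

lemma le_card_graphOn_sdiff_graphOn {c c' : Fin d → F} (hc : c ≠ c') {s : Finset F} {t : ℕ}
    (hs : t + d ≤ #s) :
    t ≤ #(graphOn s (evalCoeffs c) \ graphOn s (evalCoeffs c')) := by
  have hagree : #{i ∈ s | evalCoeffs c i = evalCoeffs c' i} < d := by
    by_contra! h
    exact hc (eq_of_evalCoeffs_eq h fun i hi => (mem_filter.1 hi).2)
  have hsub : graphOn {i ∈ s | ¬ evalCoeffs c i = evalCoeffs c' i} (evalCoeffs c) ⊆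
      graphOn s (evalCoeffs c) \ graphOn s (evalCoeffs c') := by
    intro v hv
    simp only [mem_sdiff, mem_graphOn, mem_filter] at hv ⊢
    grind
  have hcard := card_le_card hsub
  have := card_filter_add_card_filter_not (s := s) fun i => evalCoeffs c i = evalCoeffs c' i
  rw [card_graphOn] at hcard
  omega

variable [Fintype F]

lemma iteratedPDeriv_NW (d : ℕ) (R : Finset F) (g : F → F) :
    iteratedPDeriv (graphOn R g) (NW F d) = ∑ c : Fin d → F with ∀ i ∈ R, evalCoeffs c i = g i,
      monomial (setExponent (graphOn Rᶜ (evalCoeffs c))) 1 := by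
  simp only [NW_eq_sum_monomial, map_sum, iteratedPDeriv_monomial_setExponent,
    graphOn_subset_graphOn (subset_univ R)]
  rw [← sum_filter]
  refine sum_congr rfl fun c hc => ?_
  rw [graphOn_sdiff_graphOn (mem_filter.1 hc).2, compl_eq_univ_sdiff]

lemma support_iteratedPDeriv_NW {R : Finset F} (hd : d ≤ #Rᶜ) (g : F → F) :
    (iteratedPDeriv (graphOn R g) (NW F d)).support =
      ({c : Fin d → F | ∀ i ∈ R, evalCoeffs c i = g i} : Finset _).image
        fun c => setExponent (graphOn Rᶜ (evalCoeffs c)) := by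
  have hinj : Function.Injective fun c : Fin d → F => setExponent (graphOn Rᶜ (evalCoeffs c)) := by
    refine setExponent_injective.comp fun c c' h => eq_of_evalCoeffs_eq hd fun i hi => ?_
    have hmem : (i, evalCoeffs c i) ∈ graphOn Rᶜ (evalCoeffs c') :=
      h ▸ mem_graphOn.2 ⟨hi, rfl⟩
    exact (mem_graphOn.1 hmem).2.symm
  rw [iteratedPDeriv_NW, support_sum_monomial_one hinj, map_eq_image]
  rfl

lemma iteratedPDeriv_NW_ne_zero {R : Finset F} (hd : d ≤ #Rᶜ) (hr : r ≤ d) (a : Fin r → F) :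
    iteratedPDeriv (graphOn R (evalCoeffs a)) (NW F d) ≠ 0 := by
  obtain ⟨c, hc⟩ := exists_evalCoeffs_eq hr a
  rw [← support_nonempty, support_iteratedPDeriv_NW hd]
  exact ⟨_, mem_image_of_mem _ (mem_filter.2 ⟨mem_univ c, fun i _ => congrFun hc i⟩)⟩

end DecidableEq

theorem pow_mul_choose_le_two_mul_finrank_projectedShiftedPartials_NW [Fintype F] {l q t : ℕ}
    (hrd : r ≤ d) (ht : t + r + d ≤ Fintype.card F) (hq : 0 < q)
    (hl : l * q ≤ Fintype.card (F × F) - (Fintype.card F - r))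
    (hqt : 2 * Fintype.card F ^ r ≤ q ^ t) :
    Fintype.card F ^ r * (Fintype.card (F × F) - (Fintype.card F - r)).choose l ≤
      2 * finrank F (projectedShiftedPartials r l (NW F d)) := by
  classical
  obtain ⟨mo⟩ := nonempty_monomialOrder (F × F)
  obtain ⟨R, -, hR⟩ := exists_subset_card_eq (s := (univ : Finset F)) (n := r)
    (by rw [card_univ]; omega)
  have hRc : #Rᶜ = Fintype.card F - r := by rw [card_compl, hR]
  set p : (Fin r → F) → MvPolynomial (F × F) F :=
    fun a => iteratedPDeriv (graphOn R (evalCoeffs a)) (NW F d)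
  have hp (a) : p a ≠ 0 := iteratedPDeriv_NW_ne_zero (by omega) hrd a
  have hlead (a) : ∃ c : Fin d → F, (∀ i ∈ R, evalCoeffs c i = evalCoeffs a i) ∧
      setExponent (graphOn Rᶜ (evalCoeffs c)) = mo.degree (p a) := by
    simpa [support_iteratedPDeriv_NW (by omega : d ≤ #Rᶜ), p] using mo.degree_mem_support (hp a)
  choose c hcR hc using hlead
  have hcinj {a b} (hab : b ≠ a) : c b ≠ c a := fun h => hab <|
    eq_of_evalCoeffs_eq hR.ge fun i hi => by rw [← hcR b i hi, h, hcR a i hi]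
  have hcard : Fintype.card (Fin r → F) = Fintype.card F ^ r := by simp
  have hmain := card_mul_choose_le_two_mul_finrank_projectedShifts mo hp (fun a => (hc a).symm)
    (fun a => (card_graphOn _ _).trans hRc)
    (fun a b hab => le_card_graphOn_sdiff_graphOn (t := t) (hcinj hab) (by omega)) hq hl
    (by rwa [hcard])
  rw [hcard] at hmain
  refine hmain.trans (Nat.mul_le_mul_left 2 (Submodule.finrank_mono (projectedShifts_mono ?_)))
  rintro _ ⟨a, rfl⟩
  exact ⟨_, (card_graphOn _ _).trans hR, rfl⟩

end NisanWigderson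

section LowerBound

theorem pow_le_of_NW_eq_sum_prod {F ι : Type*} [Field F] [Fintype F] [Fintype ι] {κ : ι → Type*}
    [∀ i, Fintype (κ i)] {Q : ∀ i, κ i → MvPolynomial (F × F) F} {d r s m l q q' t : ℕ}
    (hNW : NW F d = ∑ i, ∏ j, Q i j) (hQ : ∀ i j, Q i j ∈ lowSupport (F × F) F s)
    (hm : ∀ i, #{j | (Q i j).totalDegree ≠ 0} ≤ m) (hrd : r ≤ d) (ht : t + r + d ≤ Fintype.card F)
    (hq : 2 ≤ q) (hqt : 2 * Fintype.card F ^ r ≤ q ^ t) (hq' : 0 < q')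
    (hl : l * q ≤ Fintype.card F * Fintype.card F - (Fintype.card F - r))
    (hl' : Fintype.card F * Fintype.card F ≤ l * q') :
    Fintype.card F ^ r ≤
      Fintype.card ι * (2 ^ (Fintype.card F + m + 1) * ((r * s + 1) * q' ^ (r * s))) := by
  rw [← Fintype.card_prod] at hl hl'
  set n := Fintype.card F
  set N := Fintype.card (F × F) - (n - r)
  have h2l : 2 * l ≤ N := by rw [mul_comm]; exact (Nat.mul_le_mul_left l hq).trans hl
  have hchoose : (Fintype.card (F × F)).choose l ≤ 2 ^ n * N.choose l :=
    (Nat.choose_le_choose l (by omega)).trans (choose_add_left_le_two_pow_mul h2l n)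
  have hterm (i : ι) : finrank F (projectedShiftedPartials r l (∏ j, Q i j)) ≤
      2 ^ m * ((r * s + 1) * (q' ^ (r * s) * (2 ^ n * N.choose l))) := by
    refine (finrank_projectedShiftedPartials_prod_le (hQ i) r l).trans ?_
    gcongr
    · norm_num
    · exact hm i
    · exact (card_filter_card_mem_Icc_le hq' hl' _).trans (by gcongr)
  refine Nat.le_of_mul_le_mul_right (c := N.choose l) ?_ (Nat.choose_pos (by omega))
  calc n ^ r * N.choose l
      ≤ 2 * finrank F (projectedShiftedPartials r l (NW F d)) :=
        pow_mul_choose_le_two_mul_finrank_projectedShiftedPartials_NW hrd ht (by omega) hl hqt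
    _ ≤ 2 * ∑ i, finrank F (projectedShiftedPartials r l (∏ j, Q i j)) := by
        rw [hNW]
        exact Nat.mul_le_mul_left 2 (finrank_projectedShiftedPartials_sum_le r l univ _)
    _ ≤ 2 * (Fintype.card ι * (2 ^ m * ((r * s + 1) * (q' ^ (r * s) * (2 ^ n * N.choose l))))) := by
        gcongr
        simpa using sum_le_sum fun i (_ : i ∈ univ) => hterm i
    _ = Fintype.card ι * (2 ^ (n + m + 1) * ((r * s + 1) * q' ^ (r * s))) * N.choose l := by ring

lemma exists_pow_mem_Icc {n : ℕ} (hn : 1 < n) (A : ℕ) :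
    ∃ r, n ^ r ∈ Icc (2 ^ (A * n)) (2 ^ ((A + 1) * n)) := by
  refine ⟨Nat.clog n (2 ^ (A * n)), mem_Icc.2 ⟨Nat.le_pow_clog hn _, ?_⟩⟩
  rcases Nat.eq_zero_or_pos A with rfl | hA
  · simpa using Nat.one_le_two_pow
  have hpos : 0 < Nat.clog n (2 ^ (A * n)) :=
    Nat.clog_pos hn (Nat.le_self_pow (by positivity) 2)
  have hpred := Nat.pow_pred_clog_lt_self hn (Nat.one_lt_two_pow (by positivity : A * n ≠ 0))
  rw [← Nat.succ_pred_eq_of_pos hpos, pow_succ, Nat.add_mul, pow_add, one_mul]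
  exact Nat.mul_le_mul hpred.le Nat.lt_two_pow_self.le

lemma exists_two_mul_mul_le_and_le_mul {q N : ℕ} (hq : 0 < q) (h : 2 * q ≤ N) :
    ∃ l, 2 * (l * q) ≤ N ∧ N ≤ l * (4 * q) := by
  have hle := Nat.div_mul_le_self N (2 * q)
  have hlt := Nat.lt_div_mul_add (a := N) (b := 2 * q) (by omega)
  have hone := Nat.mul_le_mul_right (2 * q) (Nat.div_pos h (by omega))
  exact ⟨N / (2 * q), by linarith, by linarith⟩

lemma mul_le_of_pow_le_two_pow {n r a K : ℕ} (hK : 2 ^ K ≤ n) (h : n ^ r ≤ 2 ^ a) :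
    K * r ≤ a :=
  (Nat.pow_le_pow_iff_right one_lt_two).1 <| calc
    2 ^ (K * r) = (2 ^ K) ^ r := pow_mul 2 K r
    _ ≤ n ^ r := Nat.pow_le_pow_left hK r
    _ ≤ 2 ^ a := h

lemma cast_le_mul_of_pow_le_two_pow {n r a K : ℕ} {ε : ℝ} (ha : 0 < a) (hε : 0 ≤ ε)
    (hK : 2 ^ K ≤ n) (haK : a ≤ K * ε) (h : n ^ r ≤ 2 ^ (a * n)) : r ≤ ε * n := by
  have hKr : (K : ℝ) * r ≤ a * n := by exact_mod_cast mul_le_of_pow_le_two_pow hK h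
  refine le_of_mul_le_mul_left (a := (a : ℝ)) ?_ (by exact_mod_cast ha)
  calc (a : ℝ) * r ≤ K * ε * r := by gcongr
    _ = ε * (K * r) := by ring
    _ ≤ ε * (a * n) := by gcongr
    _ = a * (ε * n) := by ring

lemma mul_log_le_of_pow_le_two_pow {n r a : ℕ} (hn : 0 < n) (h : n ^ r ≤ 2 ^ a) :
    r * Real.log n ≤ a := by
  have hlog : Real.log ((n : ℝ) ^ r) ≤ Real.log (2 ^ a) :=
    Real.log_le_log (by positivity) (by exact_mod_cast h)
  rw [Real.log_pow, Real.log_pow] at hlog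
  exact hlog.trans (mul_le_of_le_one_right a.cast_nonneg (by linarith [Real.log_two_lt_d9]))

lemma mul_mul_floor_log_le {n r B b : ℕ} (hB : 0 < B) (hb : 0 < b)
    (h : r * Real.log n ≤ (B * n : ℕ)) :
    b * (r * ⌊(B * b : ℝ)⁻¹ * Real.log n⌋₊) ≤ n := by
  have hlog : 0 ≤ Real.log n := Real.log_natCast_nonneg n
  have hreal : (b : ℝ) * (r * ⌊(B * b : ℝ)⁻¹ * Real.log n⌋₊) ≤ n := by
    calc (b : ℝ) * (r * ⌊(B * b : ℝ)⁻¹ * Real.log n⌋₊)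
        ≤ b * (r * ((B * b : ℝ)⁻¹ * Real.log n)) := by
          gcongr
          exact Nat.floor_le (mul_nonneg (by positivity) hlog)
      _ = (B : ℝ)⁻¹ * (r * Real.log n) := by field_simp
      _ ≤ (B : ℝ)⁻¹ * (B * n : ℕ) := by gcongr
      _ = n := by push_cast; field_simp
  exact_mod_cast hreal

lemma succ_mul_two_pow_pow_le {n b w : ℕ} (hb : 0 < b) (h : b * w ≤ n) :
    (w + 1) * (2 ^ b) ^ w ≤ 2 ^ (2 * n) := by
  have hw : w ≤ n := (Nat.le_mul_of_pos_left w hb).trans h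
  rw [← pow_mul, two_mul, pow_add]
  exact Nat.mul_le_mul (Nat.lt_two_pow_self.trans_le (Nat.pow_le_pow_right two_pos hw))
    (Nat.pow_le_pow_right two_pos h)

lemma exists_add_add_floor_le {δ : ℝ} (hδ : 0 ≤ δ) {n r a b : ℕ} (hr : r ≤ (1 - δ) / 2 * n)
    (hb : a ≤ b * ((1 - δ) / 2)) : ∃ t, t + r + ⌊δ * n⌋₊ ≤ n ∧ a * n ≤ b * t := by
  have hfloor : (⌊δ * n⌋₊ : ℝ) ≤ δ * n := Nat.floor_le (by positivity)
  have hle : r + ⌊δ * n⌋₊ ≤ n := by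
    have : (r : ℝ) + ⌊δ * n⌋₊ ≤ n := by linarith [(r.cast_nonneg : (0 : ℝ) ≤ r)]
    exact_mod_cast this
  obtain ⟨t, ht⟩ := Nat.exists_eq_add_of_le' hle
  refine ⟨t, by omega, ?_⟩
  have htn : (1 - δ) / 2 * n ≤ t := by
    have : (n : ℝ) = t + (r + ⌊δ * n⌋₊) := by exact_mod_cast ht
    linarith
  have hreal : (a : ℝ) * n ≤ b * t := by
    calc (a : ℝ) * n ≤ b * ((1 - δ) / 2) * n := by gcongr
      _ = b * ((1 - δ) / 2 * n) := mul_assoc ..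
      _ ≤ b * t := by gcongr
  exact_mod_cast hreal

lemma exists_parameters {δ : ℝ} (hδ0 : 0 < δ) (hδ1 : δ < 1) (A : ℕ) :
    ∃ q, 2 ≤ q ∧ ∃ β : ℝ, 0 < β ∧ ∃ n₀, ∀ n, n₀ ≤ n → ∃ r t l,
      2 ^ (A * n) ≤ n ^ r ∧ 2 * n ^ r ≤ q ^ t ∧ r ≤ ⌊δ * n⌋₊ ∧ t + r + ⌊δ * n⌋₊ ≤ n ∧
      l * q ≤ n * n - n ∧ n * n ≤ l * (4 * q) ∧
      (r * ⌊β * Real.log n⌋₊ + 1) * (4 * q) ^ (r * ⌊β * Real.log n⌋₊) ≤ 2 ^ (2 * n) := by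
  obtain ⟨ε, hε, hεδ, hε1⟩ : ∃ ε : ℝ, 0 < ε ∧ ε ≤ δ ∧ ε ≤ (1 - δ) / 2 :=
    ⟨min δ ((1 - δ) / 2), lt_min hδ0 (by linarith), min_le_left _ _, min_le_right _ _⟩
  obtain ⟨K, hK⟩ := exists_nat_ge ((A + 1) / ε)
  obtain ⟨b, hb⟩ := exists_nat_ge ((A + 2) / ε)
  rw [div_le_iff₀ hε] at hK hb
  have hb0 : b ≠ 0 := by
    rintro rfl
    rw [Nat.cast_zero, zero_mul] at hb
    linarith [A.cast_nonneg (α := ℝ)]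
  refine ⟨2 ^ b, Nat.le_self_pow hb0 2, ((A + 1 : ℕ) * (b + 2 : ℕ) : ℝ)⁻¹, by positivity,
    2 ^ (K + b + 1), fun n hn => ?_⟩
  have hnK : 2 ^ K ≤ n := (Nat.pow_le_pow_right two_pos (by omega)).trans hn
  have hnb : 2 ^ (b + 1) ≤ n := (Nat.pow_le_pow_right two_pos (by omega)).trans hn
  have hn2 : 2 ≤ n := (Nat.le_self_pow b.succ_ne_zero 2).trans hnb
  obtain ⟨r, hr⟩ := exists_pow_mem_Icc hn2 A
  obtain ⟨hrA, hrB⟩ := mem_Icc.1 hr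
  have hrε : (r : ℝ) ≤ ε * n :=
    cast_le_mul_of_pow_le_two_pow A.succ_pos hε.le hnK (by push_cast; exact hK) hrB
  obtain ⟨t, ht, hAt⟩ := exists_add_add_floor_le (n := n) (a := A + 2) (b := b) hδ0.le
    (hrε.trans (by gcongr)) (by push_cast; exact hb.trans (by gcongr))
  obtain ⟨l, hl, hl'⟩ := exists_two_mul_mul_le_and_le_mul (q := 2 ^ b) (N := n * n) (by positivity)
    (by rw [← pow_succ']; exact hnb.trans (Nat.le_mul_self n))
  refine ⟨r, t, l, hrA, ?_, Nat.le_floor (hrε.trans (by gcongr)), ht, ?_, hl', ?_⟩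
  · calc 2 * n ^ r ≤ 2 * 2 ^ ((A + 1) * n) := Nat.mul_le_mul_left 2 hrB
      _ = 2 ^ ((A + 1) * n + 1) := (pow_succ' ..).symm
      _ ≤ 2 ^ (b * t) := Nat.pow_le_pow_right two_pos (by linarith)
      _ = (2 ^ b) ^ t := pow_mul ..
  · have := Nat.mul_le_mul_right n hn2
    omega
  · rw [show 4 * 2 ^ b = 2 ^ (b + 2) by ring]
    exact succ_mul_two_pow_pow_le (by omega) <| mul_mul_floor_log_le A.succ_pos (by omega) <|
      mul_log_le_of_pow_le_two_pow (by omega) hrB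

lemma card_totalDegree_ne_zero_le_sum {σ R κ : Type*} [CommSemiring R] [Fintype κ]
    {Q : κ → MvPolynomial σ R} {deg : κ → ℕ} (hQ : ∀ j, (Q j).IsHomogeneous (deg j)) :
    #{j | (Q j).totalDegree ≠ 0} ≤ ∑ j, deg j := by
  rw [card_filter]
  refine sum_le_sum fun j _ => ?_
  have := (hQ j).totalDegree_le
  split_ifs <;> omega

end LowerBound

end NW

theorem stmt1_general.{u, v, w} (δ : ℝ) (hδ0 : 0 < δ) (hδ1 : δ < 1) (c : ℝ) :
    ∃ β : ℝ, 0 < β ∧ ∃ n₀ : ℕ, ∀ (F : Type u) [Field F] [Fintype F], n₀ ≤ Fintype.card F →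
      ∀ (ι : Type v) [Fintype ι] (κ : ι → Type w) [∀ i, Fintype (κ i)]
        (Q : (i : ι) → κ i → MvPolynomial (F × F) F),
        (∀ i, ((Finset.univ : Finset (κ i)).filter fun j => (Q i j).totalDegree ≠ 0).card ≤
          Fintype.card F) →
        (∀ i j, ∀ u ∈ (Q i j).support,
          (u.support.card : ℝ) ≤ β * Real.log (Fintype.card F)) →
        NW F ⌊δ * Fintype.card F⌋₊ = ∑ i, ∏ j, Q i j →
        (2 : ℝ) ^ (c * Fintype.card F) ≤ Fintype.card ι := by
  obtain ⟨C, hC⟩ := exists_nat_ge c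
  obtain ⟨q, hq, β, hβ, n₀, hparam⟩ := NW.exists_parameters hδ0 hδ1 (C + 5)
  refine ⟨β, hβ, n₀, fun F _ _ hn ι _ κ _ Q hdeg hsupp hNW => ?_⟩
  have hn0 : 0 < Fintype.card F := Fintype.card_pos
  set n := Fintype.card F
  obtain ⟨r, t, l, hrA, hqt, hrd, ht, hl, hl', hrs⟩ := hparam n hn
  have hcore := NW.pow_le_of_NW_eq_sum_prod hNW
    (fun i j u hu => Nat.le_floor (hsupp i j u hu)) hdeg hrd ht hq hqt (by positivity : 0 < 4 * q)
    (hl.trans (Nat.sub_le_sub_left (Nat.sub_le _ _) _)) hl'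
  have hpow : 2 ^ (C * n) * 2 ^ (5 * n) ≤ Fintype.card ι * 2 ^ (5 * n) := by
    calc 2 ^ (C * n) * 2 ^ (5 * n) = 2 ^ ((C + 5) * n) := by ring
      _ ≤ Fintype.card ι * (2 ^ (n + n + 1) * 2 ^ (2 * n)) :=
        (hrA.trans hcore).trans (by gcongr)
      _ ≤ Fintype.card ι * 2 ^ (5 * n) := by
        rw [← pow_add]
        gcongr <;> omega
  calc (2 : ℝ) ^ (c * n) ≤ 2 ^ ((C * n : ℕ) : ℝ) := by
        push_cast
        gcongr
        norm_num
    _ = (2 ^ (C * n) : ℕ) := by rw [Real.rpow_natCast]; norm_cast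
    _ ≤ Fintype.card ι := by exact_mod_cast Nat.le_of_mul_le_mul_right hpow (by positivity)

/-- For every constant `0 < δ < 1` there are constants `β > 0`, `c > 0`
and `n₀` such that for every `n = 2 ^ k ≥ n₀`, with `d = ⌊δ n⌋`: if
`NW_d = Σ_{i=1}^{T} Π_{j=1}^{d_i} Q_{i,j}` is a homogeneous ΣΠΣΠ representation in which
every monomial appearing in any `Q_{i,j}` has support at most `β log n`,
then `T ≥ 2 ^ (c n)`. -/
theorem stmt1 (δ : ℝ) (hδ0 : 0 < δ) (hδ1 : δ < 1) :
    ∃ β : ℝ, 0 < β ∧ ∃ c : ℝ, 0 < c ∧ ∃ n₀ : ℕ, ∀ k : ℕ, n₀ ≤ 2 ^ k →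
      ∀ (F : Type) [Field F] [Fintype F], Fintype.card F = 2 ^ k →
      ∀ (T : ℕ) (dd : Fin T → ℕ)
        (Q : (i : Fin T) → Fin (dd i) → MvPolynomial (F × F) F)
        (deg : (i : Fin T) → Fin (dd i) → ℕ),
        (∀ i j, (Q i j).IsHomogeneous (deg i j)) →
        (∀ i, ∑ j, deg i j = 2 ^ k) →
        (∀ i j, ∀ u ∈ (Q i j).support,
          (u.support.card : ℝ) ≤ β * Real.log ((2 : ℝ) ^ k)) →
        NW F ⌊δ * (2 ^ k : ℝ)⌋₊ = ∑ i, ∏ j, Q i j →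
        (2 : ℝ) ^ (c * (2 : ℝ) ^ k) ≤ (T : ℝ) := by
  obtain ⟨β, hβ, n₀, h⟩ := stmt1_general δ hδ0 hδ1 1
  refine ⟨β, hβ, 1, one_pos, n₀, fun k hk F _ _ hF T dd Q deg hQ hdeg hsupp hNW => ?_⟩
  simpa [hF] using h F (hk.trans hF.ge) (Fin T) (fun i => Fin (dd i)) Q
    (fun i => (NW.card_totalDegree_ne_zero_le_sum (hQ i)).trans (by rw [hdeg, hF]))
    (by simpa [hF] using hsupp) (by simpa [hF] using hNW)
end
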